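/- Let n ≥ 1 be an integer, θ ∈ (0, π/2) and 1 ≤ k ≤ n. Let s be a smooth capillary function on C_θ with τ[s] > 0 and 1-homogeneous extension G, and let υ be a C² capillary function on C_θ with 1-homogeneous extension Υ. Suppose the linearized σ_k operator annihilates υ, i.e., for every ζ ∈ C_θ the function t ↦ σ_k(τ[s + tυ])(ζ) (which equals the k-th elementary symmetric polynomial of the eigenvalues of D²(G + tΥ)(u), u = ζ + cos θ E_{n+1}, a polynomial in t) has vanishing derivative at t = 0. Then there exists a vector a ∈ ℝ^{n+1} with ⟨a, E_{n+1}⟩ = 0 such that υ(ζ) = ⟨a, ζ⟩ for all ζ ∈ C_θ. -/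

import Mathlib

open MeasureTheory Real Set
open scoped RealInnerProductSpace

noncomputable section

abbrev V (n : ℕ) := EuclideanSpace ℝ (Fin (n + 1))

/-- The vertical unit vector `E_{n+1}`. -/
def Etop (n : ℕ) : V n := EuclideanSpace.single (Fin.last n) 1

/-- The spherical cap `S^n_θ`. -/
def sphCap (n : ℕ) (θ : ℝ) : Set (V n) :=
  {u | ‖u‖ = 1 ∧ Real.cos θ ≤ u (Fin.last n)}

/-- The boundary circle `∂S^n_θ`. -/
def sphCapBdry (n : ℕ) (θ : ℝ) : Set (V n) :=
  {u | ‖u‖ = 1 ∧ u (Fin.last n) = Real.cos θ}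

/-- The capillary cap `C_θ`. -/
def capCap (n : ℕ) (θ : ℝ) : Set (V n) :=
  {ζ | 0 ≤ ζ (Fin.last n) ∧ ‖ζ + Real.cos θ • Etop n‖ = 1}

/-- The open cone over `S^n_θ`. -/
def coneCap (n : ℕ) (θ : ℝ) : Set (V n) :=
  {x | ∃ l : ℝ, 0 < l ∧ ∃ u ∈ sphCap n θ, x = l • u}

/-- `G` is a positively 1-homogeneous extension of `g : C_θ → ℝ` which is `C^m` on an
open neighborhood of the cone over `S^n_θ`. -/
def IsHomExt (n : ℕ) (θ : ℝ) (m : ℕ∞) (g G : V n → ℝ) : Prop :=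
  (∃ U : Set (V n), IsOpen U ∧ coneCap n θ ⊆ U ∧ ContDiffOn ℝ m G U) ∧
  (∀ l : ℝ, 0 < l → ∀ u ∈ sphCap n θ, G (l • u) = l * G u) ∧
  (∀ ζ ∈ capCap n θ, G (ζ + Real.cos θ • Etop n) = g ζ)

/-- The Hessian of `G` at `u` as a quadratic/bilinear form. -/
def hessQ (n : ℕ) (G : V n → ℝ) (u v w : V n) : ℝ :=
  fderiv ℝ (fderiv ℝ G) u v w

/-- The Hessian matrix `D²G(u)` in the standard coordinates. -/
def hessM (n : ℕ) (G : V n → ℝ) (u : V n) : Matrix (Fin (n + 1)) (Fin (n + 1)) ℝ :=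
  fun i j => fderiv ℝ (fderiv ℝ G) u (EuclideanSpace.single i 1) (EuclideanSpace.single j 1)

/-- `σ_j` of the eigenvalues of `D²G(u)` (via characteristic polynomial coefficients). -/
def sigmaElem (n : ℕ) (j : ℕ) (G : V n → ℝ) (u : V n) : ℝ :=
  (-1 : ℝ) ^ j * ((hessM n G u).charpoly.coeff (n + 1 - j))

/-- `τ[g] ≥ 0` : the Hessian of the extension is positive semidefinite on `S^n_θ`. -/
def TauNonneg (n : ℕ) (θ : ℝ) (G : V n → ℝ) : Prop :=
  ∀ u ∈ sphCap n θ, ∀ v : V n, 0 ≤ hessQ n G u v v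

/-- `τ[g] > 0`. -/
def TauPos (n : ℕ) (θ : ℝ) (G : V n → ℝ) : Prop :=
  TauNonneg n θ G ∧
  ∀ u ∈ sphCap n θ, ∀ v : V n, v ≠ 0 → ⟪v, u⟫ = 0 → 0 < hessQ n G u v v

/-- Capillary (Robin) boundary condition: `∂_{n+1}G = 0` on `∂S^n_θ`. -/
def IsCapillaryF (n : ℕ) (θ : ℝ) (G : V n → ℝ) : Prop :=
  ∀ u ∈ sphCapBdry n θ, fderiv ℝ G u (Etop n) = 0

/-- Reflection negating the horizontal coordinates. -/
def horizNeg (n : ℕ) (ζ : V n) : V n := (2 * ζ (Fin.last n)) • Etop n - ζ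

/-- Support function of a set. -/
def suppFn (n : ℕ) (K : Set (V n)) (u : V n) : ℝ := sSup ((fun y => ⟪u, y⟫) '' K)

/-- Relative interior (within the hyperplane `{x_{n+1}=0}`) of the base `K ∩ {x_{n+1}=0}`. -/
def relintBase (n : ℕ) (K : Set (V n)) : Set (V n) :=
  {x | x (Fin.last n) = 0 ∧ ∃ ε > 0, ∀ y : V n, y (Fin.last n) = 0 → ‖y - x‖ < ε → y ∈ K}

/-- A `θ`-capillary convex body. -/
def IsCapBody (n : ℕ) (θ : ℝ) (K : Set (V n)) : Prop :=
  IsCompact K ∧ Convex ℝ K ∧ (interior K).Nonempty ∧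
  (∀ x ∈ K, 0 ≤ x (Fin.last n)) ∧
  (∀ x ∈ K, 0 < x (Fin.last n) → ∀ u : V n, ‖u‖ = 1 → ⟪u, x⟫ = suppFn n K u →
    Real.cos θ ≤ u (Fin.last n)) ∧
  (∀ v : V n, ‖v‖ = 1 → v (Fin.last n) = 0 →
    suppFn n K (Real.sin θ • v + Real.cos θ • Etop n) = Real.sin θ * suppFn n K v) ∧
  (relintBase n K).Nonempty

/-- `ψ` is one of `x²`, `x^p (p<0)`, `-log x`. -/
def PsiOK (ψ : ℝ → ℝ) : Prop :=
  (ψ = fun x : ℝ => x ^ 2) ∨ (∃ p : ℝ, p < 0 ∧ ψ = fun x : ℝ => x ^ p) ∨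
    (ψ = fun x : ℝ => -Real.log x)

/-!
In gnomonic coordinates `f y = Υ (y, 1)` on the ball `|y| ≤ tan θ`, capillarity together with
Euler's relation becomes the Robin condition `f y = Df(y) y` on the boundary sphere. Let `A₀`, `A₁`,
`A₂` be the Hessians in these coordinates of the support function of the cap, of `s` and of `υ`.
That the linearized `σ_k` annihilates `υ` means that the coefficient of `X₀^(n-k) X₁^(k-1) X₂` in
`det (X₀ A₀ + X₁ A₁ + X₂ A₂)` vanishes; by a strict pointwise Alexandrov inequality the coefficient
of `X₀^(n-k) X₁^(k-2) X₂²` is then nonpositive, and zero only where `A₂ = 0`. The Robin condition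
makes integrals of mixed discriminants symmetric in all their entries, so the latter coefficient
integrates to zero against `s`, which is positive after subtracting a linear function. Hence
`A₂ = 0` and `f` is linear. For `k = 1` one replaces `s` by the support function of the cap, which
reduces to `k = 2`.

Only `C²` regularity is available, so the symmetry of the integrals is not derived by
differentiating cofactors: it follows from the fact that `∫ det (c + DΦ)` does not depend on the
compactly supported `C¹` field `Φ`.
-/

open Filter Topology

/-! ### Elementary symmetric functions -/

section Esym

variable {ι R 𝕜 : Type*} [CommRing R] [Field 𝕜] [LinearOrder 𝕜]
  [IsStrictOrderedRing 𝕜]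

/-- The elementary symmetric function of degree `k` of the values `a i`, `i ∈ S`; the index set is
explicit because the induction on the degree removes one index at a time. -/
def esym (S : Finset ι) (k : ℕ) (a : ι → R) : R :=
  ∑ T ∈ S.powersetCard k, ∏ i ∈ T, a i

lemma esym_zero (S : Finset ι) (a : ι → R) : esym S 0 a = 1 := by
  simp [esym]

lemma esym_one (S : Finset ι) (a : ι → R) : esym S 1 a = ∑ i ∈ S, a i := by
  simp [esym, Finset.powersetCard_one]

lemma esym_smul (S : Finset ι) (k : ℕ) (c : R) (a : ι → R) :
    esym S k (c • a) = c ^ k * esym S k a := by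
  rw [esym, esym, Finset.mul_sum]
  refine Finset.sum_congr rfl fun T hT => ?_
  simp [Finset.prod_mul_distrib, (Finset.mem_powersetCard.1 hT).2]

lemma esym_pos {S : Finset ι} {k : ℕ} {a : ι → 𝕜} (hk : k ≤ S.card)
    (ha : ∀ i ∈ S, 0 < a i) : 0 < esym S k a :=
  Finset.sum_pos
    (fun _ hT => Finset.prod_pos fun i hi => ha i ((Finset.mem_powersetCard.1 hT).1 hi))
    (Finset.powersetCard_nonempty.2 hk)

lemma parallel_sum_superadd {x y x' y' : 𝕜} (hx : 0 < x) (hy : 0 < y) (hx' : 0 < x')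
    (hy' : 0 < y') :
    x * y / (y + x) + x' * y' / (y' + x') ≤ (x + x') * (y + y') / ((y + y') + (x + x')) := by
  rw [div_add_div _ _ (by positivity) (by positivity), div_le_div_iff₀ (by positivity)
    (by positivity)]
  linarith [sq_nonneg (x * y' - x' * y)]

lemma parallel_sum_mono {x y z : 𝕜} (hx : 0 < x) (hy : 0 < y) (hyz : y ≤ z) :
    x * y / (y + x) ≤ x * z / (z + x) := by
  rw [div_le_div_iff₀ (by linarith) (by linarith)]
  linarith [mul_le_mul_of_nonneg_left hyz (mul_pos hx hx).le]

section Erase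

variable [DecidableEq ι]

/-- The weighted elementary symmetric function `∑ μ(U) ∏_{i ∈ W} a i` over the disjoint pairs
`U, W ⊆ S` with `|U| = j` and `|W| = l`. -/
def mixedEsym (S : Finset ι) (μ : Finset ι → R) (j l : ℕ) (a : ι → R) : R :=
  ∑ U ∈ S.powersetCard j, μ U * esym (S \ U) l a

lemma mixedEsym_prod_zero_left (S : Finset ι) (l : ℕ) (a b : ι → R) :
    mixedEsym S (fun U => ∏ i ∈ U, b i) 0 l a = esym S l a := by
  simp [mixedEsym]

lemma mixedEsym_prod_zero_right (S : Finset ι) (j : ℕ) (a b : ι → R) :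
    mixedEsym S (fun U => ∏ i ∈ U, b i) j 0 a = esym S j b := by
  simp [mixedEsym, esym]

/-- Both sides sum over the ways to cut a `k`-subset of `S` into a `j`-subset and the rest. -/
lemma sum_powersetCard_sum_powersetCard {M : Type*} [AddCommMonoid M] (S : Finset ι) {j k : ℕ}
    (hjk : j ≤ k) (f : Finset ι → Finset ι → M) :
    ∑ T ∈ S.powersetCard k, ∑ U ∈ T.powersetCard j, f U (T \ U) =
      ∑ U ∈ S.powersetCard j, ∑ W ∈ (S \ U).powersetCard (k - j), f U W := by
  rw [Finset.sum_sigma', Finset.sum_sigma']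
  refine Finset.sum_bij' (fun p _ => ⟨p.2, p.1 \ p.2⟩) (fun p _ => ⟨p.1 ∪ p.2, p.1⟩)
    ?_ ?_ ?_ ?_ fun _ _ => rfl
  · rintro ⟨T, U⟩ hp
    simp only [Finset.mem_sigma, Finset.mem_powersetCard] at hp ⊢
    obtain ⟨⟨hTS, hT⟩, hUT, hU⟩ := hp
    exact ⟨⟨hUT.trans hTS, hU⟩, Finset.sdiff_subset_sdiff hTS le_rfl, by
      rw [Finset.card_sdiff_of_subset hUT, hT, hU]⟩
  · rintro ⟨U, W⟩ hp
    simp only [Finset.mem_sigma, Finset.mem_powersetCard, Finset.subset_sdiff] at hp ⊢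
    obtain ⟨⟨hUS, hU⟩, ⟨hWS, hWU⟩, hW⟩ := hp
    refine ⟨⟨Finset.union_subset hUS hWS, ?_⟩, Finset.subset_union_left, hU⟩
    rw [Finset.card_union_of_disjoint hWU.symm]
    omega
  · rintro ⟨T, U⟩ hp
    simp only [Finset.mem_sigma, Finset.mem_powersetCard] at hp
    simp [Finset.union_sdiff_of_subset hp.2.1]
  · rintro ⟨U, W⟩ hp
    simp only [Finset.mem_sigma, Finset.mem_powersetCard, Finset.subset_sdiff] at hp
    simp [Finset.union_sdiff_cancel_left hp.2.1.2.symm]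

lemma sum_mul_esym_erase (S : Finset ι) (k : ℕ) (a : ι → R) :
    ∑ i ∈ S, a i * esym (S.erase i) k a = (k + 1) * esym S (k + 1) a := by
  have hcount := sum_powersetCard_sum_powersetCard S (Nat.le_add_left 1 k)
    fun U W => (∏ i ∈ U, a i) * ∏ i ∈ W, a i
  have hterm : ∀ T ∈ S.powersetCard (k + 1),
      ∑ U ∈ T.powersetCard 1, (∏ i ∈ U, a i) * ∏ i ∈ T \ U, a i = (k + 1) * ∏ i ∈ T, a i := by
    intro T hT
    have : ∀ U ∈ T.powersetCard 1, (∏ i ∈ U, a i) * ∏ i ∈ T \ U, a i = ∏ i ∈ T, a i :=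
      fun U hU => by rw [mul_comm, Finset.prod_sdiff (Finset.mem_powersetCard.1 hU).1]
    rw [Finset.sum_congr rfl this]
    simp [(Finset.mem_powersetCard.1 hT).2]
  rw [Finset.sum_congr rfl hterm, ← Finset.mul_sum] at hcount
  simpa [esym, Finset.powersetCard_one, Finset.sdiff_singleton_eq_erase, Finset.mul_sum]
    using hcount.symm

lemma esym_add_smul (S : Finset ι) (k : ℕ) (a b : ι → R) (t : R) :
    esym S k (a + t • b) =
      ∑ j ∈ Finset.range (k + 1), mixedEsym S (fun U => ∏ i ∈ U, b i) j (k - j) a * t ^ j := by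
  have hexpand : ∀ T ∈ S.powersetCard k, ∏ i ∈ T, (a + t • b) i =
      ∑ j ∈ Finset.range (k + 1), ∑ U ∈ T.powersetCard j,
        (∏ i ∈ U, b i) * (∏ i ∈ T \ U, a i) * t ^ j := by
    intro T hT
    have : ∏ i ∈ T, (a + t • b) i = ∏ i ∈ T, (t * b i + a i) :=
      Finset.prod_congr rfl fun i _ => by simp [add_comm]
    rw [this, Finset.prod_add, Finset.sum_powerset, (Finset.mem_powersetCard.1 hT).2]
    refine Finset.sum_congr rfl fun j _ => Finset.sum_congr rfl fun U hU => ?_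
    rw [Finset.prod_mul_distrib, Finset.prod_const, (Finset.mem_powersetCard.1 hU).2]
    ring
  rw [esym, Finset.sum_congr rfl hexpand, Finset.sum_comm]
  refine Finset.sum_congr rfl fun j hj => ?_
  rw [sum_powersetCard_sum_powersetCard S (Finset.mem_range_succ_iff.1 hj)
    fun U W => (∏ i ∈ U, b i) * (∏ i ∈ W, a i) * t ^ j]
  simp only [mixedEsym, esym, Finset.mul_sum, Finset.sum_mul]

lemma esym_succ_erase {S : Finset ι} {i : ι} (hi : i ∈ S) (k : ℕ) (a : ι → R) :
    esym S (k + 1) a = esym (S.erase i) (k + 1) a + a i * esym (S.erase i) k a := by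
  have hni : i ∉ S.erase i := Finset.notMem_erase i S
  have hnot : ∀ {T : Finset ι} {l : ℕ}, T ∈ (S.erase i).powersetCard l → i ∉ T :=
    fun hT h => hni ((Finset.mem_powersetCard.1 hT).1 h)
  conv_lhs => rw [← Finset.insert_erase hi]
  rw [esym, Finset.powersetCard_succ_insert hni, Finset.sum_union, Finset.sum_image, esym, esym,
    Finset.mul_sum]
  · congr 1
    exact Finset.sum_congr rfl fun T hT => Finset.prod_insert (hnot hT)
  · intro T hT T' hT' h
    rw [← Finset.erase_insert (hnot hT), h, Finset.erase_insert (hnot hT')]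
  · refine Finset.disjoint_left.2 fun T hT hT' => ?_
    obtain ⟨T', -, rfl⟩ := Finset.mem_image.1 hT'
    exact hnot hT (Finset.mem_insert_self i T')

lemma succ_mul_esym_div {S : Finset ι} {k : ℕ} {a : ι → 𝕜} (hk : k + 2 ≤ S.card)
    (ha : ∀ i ∈ S, 0 < a i) :
    (k + 2) * (esym S (k + 1 + 1) a / esym S (k + 1) a) =
      ∑ i ∈ S, a i * (esym (S.erase i) (k + 1) a / esym (S.erase i) k a) /
        (esym (S.erase i) (k + 1) a / esym (S.erase i) k a + a i) := by
  have hsum := sum_mul_esym_erase S (k + 1) a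
  push_cast at hsum
  rw [mul_div_assoc', show (k + 2 : 𝕜) = k + 1 + 1 by ring, ← hsum, Finset.sum_div]
  refine Finset.sum_congr rfl fun i hi => ?_
  have hcard := Finset.card_erase_of_mem hi
  have ha' : ∀ j ∈ S.erase i, 0 < a j := fun j hj => ha j (Finset.mem_of_mem_erase hj)
  have hpos : 0 < esym (S.erase i) k a := esym_pos (by omega) ha'
  have hpos' : 0 < esym (S.erase i) (k + 1) a := esym_pos (by omega) ha'
  have hai := ha i hi
  rw [esym_succ_erase hi k a]
  field_simp

end Erase

lemma two_mul_esym_two (S : Finset ι) (a : ι → R) :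
    2 * esym S 2 a = (∑ i ∈ S, a i) ^ 2 - ∑ i ∈ S, a i ^ 2 := by
  classical
  have h := sum_mul_esym_erase S 1 a
  have hterm : ∀ i ∈ S, a i * ∑ j ∈ S.erase i, a j = a i * (∑ j ∈ S, a j) - a i ^ 2 :=
    fun i hi => by rw [← Finset.add_sum_erase _ _ hi]; ring
  simp only [esym_one] at h
  rw [Finset.sum_congr rfl hterm, Finset.sum_sub_distrib, ← Finset.sum_mul] at h
  push_cast at h
  linear_combination -h

/-- The Marcus–Lopes inequality. By `succ_mul_esym_div` the quotient of degree `k + 2` is a sum of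
parallel sums of `a i` and quotients of degree `k + 1`, and the parallel sum is superadditive. -/
lemma esym_div_superadd {k : ℕ} {S : Finset ι} {a b : ι → 𝕜} (hk : k + 1 ≤ S.card)
    (ha : ∀ i ∈ S, 0 < a i) (hb : ∀ i ∈ S, 0 < b i) :
    esym S (k + 1) a / esym S k a + esym S (k + 1) b / esym S k b ≤
      esym S (k + 1) (a + b) / esym S k (a + b) := by
  classical
  induction k generalizing S with
  | zero => simp [esym_zero, esym_one, Finset.sum_add_distrib]
  | succ k ih =>
    have hab : ∀ i ∈ S, 0 < (a + b) i := fun i hi => add_pos (ha i hi) (hb i hi)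
    have hk2 : (0 : 𝕜) < k + 2 := by positivity
    rw [← mul_le_mul_iff_right₀ hk2, mul_add, succ_mul_esym_div hk ha, succ_mul_esym_div hk hb,
      succ_mul_esym_div hk hab, ← Finset.sum_add_distrib]
    refine Finset.sum_le_sum fun i hi => ?_
    have hcard := Finset.card_erase_of_mem hi
    have hpos : ∀ c : ι → 𝕜, (∀ i ∈ S, 0 < c i) →
        0 < esym (S.erase i) (k + 1) c / esym (S.erase i) k c := fun c hc =>
      div_pos (esym_pos (by omega) fun j hj => hc j (Finset.mem_of_mem_erase hj))
        (esym_pos (by omega) fun j hj => hc j (Finset.mem_of_mem_erase hj))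
    refine (parallel_sum_superadd (ha i hi) (hpos a ha) (hb i hi) (hpos b hb)).trans ?_
    exact parallel_sum_mono (hab i hi) (add_pos (hpos a ha) (hpos b hb))
      (ih (by omega) (fun j hj => ha j (Finset.mem_of_mem_erase hj))
        (fun j hj => hb j (Finset.mem_of_mem_erase hj)))

lemma esym_div_mul_esym_div_le {k : ℕ} {S : Finset ι} {a b : ι → 𝕜} (hk : k + 1 ≤ S.card)
    (hadd : ∀ i ∈ S, 0 < (a + b) i) (hsub : ∀ i ∈ S, 0 < (a - b) i) :
    (esym S (k + 1) (a + b) / esym S k (a + b)) * (esym S (k + 1) (a - b) / esym S k (a - b)) ≤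
      (esym S (k + 1) a / esym S k a) ^ 2 := by
  classical
  have hsum := esym_div_superadd hk hadd hsub
  have htwo : (2 : 𝕜) ^ (k + 1) * esym S (k + 1) a / (2 ^ k * esym S k a) =
      2 * (esym S (k + 1) a / esym S k a) := by
    rw [pow_succ]
    field_simp
  rw [show a + b + (a - b) = (2 : 𝕜) • a by module, esym_smul, esym_smul, htwo] at hsum
  have hpos : 0 < esym S (k + 1) (a + b) / esym S k (a + b) :=
    div_pos (esym_pos hk hadd) (esym_pos (by omega) hadd)
  have hpos' : 0 < esym S (k + 1) (a - b) / esym S k (a - b) :=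
    div_pos (esym_pos hk hsub) (esym_pos (by omega) hsub)
  nlinarith [sq_nonneg (esym S (k + 1) (a + b) / esym S k (a + b) -
    esym S (k + 1) (a - b) / esym S k (a - b))]

lemma esym_mul_esym_le {j k : ℕ} (hjk : j ≤ k) {S : Finset ι} {a b : ι → 𝕜} (hk : k ≤ S.card)
    (hadd : ∀ i ∈ S, 0 < (a + b) i) (hsub : ∀ i ∈ S, 0 < (a - b) i) :
    esym S k (a + b) * esym S k (a - b) * esym S j a ^ 2 ≤
      esym S j (a + b) * esym S j (a - b) * esym S k a ^ 2 := by
  classical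
  have ha : ∀ i ∈ S, 0 < a i := fun i hi => by
    have := hadd i hi
    have := hsub i hi
    simp only [Pi.add_apply, Pi.sub_apply] at *
    linarith
  induction k, hjk using Nat.le_induction with
  | base => exact le_rfl
  | succ k hjk ih =>
    have hratio := esym_div_mul_esym_div_le hk hadd hsub
    have hk' : k ≤ S.card := by omega
    have hposa : 0 < esym S k a := esym_pos hk' ha
    have hposadd : 0 < esym S k (a + b) := esym_pos hk' hadd
    have hpossub : 0 < esym S k (a - b) := esym_pos hk' hsub
    have hposj : 0 < esym S j a := esym_pos (by omega) ha
    rw [div_mul_div_comm, div_pow, div_le_div_iff₀ (by positivity) (by positivity)] at hratio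
    have hmul := mul_le_mul hratio (ih hk') (by positivity)
      (mul_nonneg (sq_nonneg _) (by positivity))
    refine le_of_mul_le_mul_left (a := esym S k a ^ 2 * (esym S k (a + b) * esym S k (a - b)))
      ?_ (by positivity)
    linear_combination hmul

end Esym

section SecondVariation

open Polynomial

variable {ι : Type*}

lemma coeff_two_nonneg {r : ℝ[X]} (h0 : r.coeff 0 = 0) (h1 : r.coeff 1 = 0)
    (h : ∀ᶠ t in 𝓝 (0 : ℝ), 0 ≤ r.eval t) : 0 ≤ r.coeff 2 := by
  obtain ⟨q, rfl⟩ : X ^ 2 ∣ r := by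
    rw [X_pow_dvd_iff]
    intro d hd
    interval_cases d <;> assumption
  have hq : (X ^ 2 * q).coeff 2 = q.eval 0 := by
    simpa [coeff_zero_eq_eval_zero] using coeff_X_pow_mul q 2 0
  rw [hq]
  refine ge_of_tendsto (x := 𝓝[≠] 0) (f := fun t => q.eval t)
    (q.continuous.continuousAt.mono_left nhdsWithin_le_nhds) ?_
  filter_upwards [h.filter_mono nhdsWithin_le_nhds, self_mem_nhdsWithin] with t ht ht0
  simp only [eval_mul, eval_pow, eval_X] at ht
  exact nonneg_of_mul_nonneg_right ht (even_two.pow_pos ht0)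

/-- The even polynomial `p(t) p(-t)` has no linear term. -/
lemma coeff_mul_comp_neg_X (p : ℝ[X]) :
    (p * p.comp (-X)).coeff 0 = p.coeff 0 ^ 2 ∧ (p * p.comp (-X)).coeff 1 = 0 ∧
      (p * p.comp (-X)).coeff 2 = 2 * p.coeff 0 * p.coeff 2 - p.coeff 1 ^ 2 := by
  rw [show (-X : ℝ[X]) = C (-1) * X by simp]
  simp only [coeff_mul, Finset.Nat.sum_antidiagonal_eq_sum_range_succ_mk, Finset.sum_range_succ,
    Finset.sum_range_zero, comp_C_mul_X_coeff]
  refine ⟨?_, ?_, ?_⟩ <;> ring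

lemma coeff_two_le_of_eventually_le {p q : ℝ[X]} (h : ∀ᶠ t in 𝓝 (0 : ℝ),
      p.eval t * p.eval (-t) * q.eval 0 ^ 2 ≤ q.eval t * q.eval (-t) * p.eval 0 ^ 2) :
    (2 * p.coeff 0 * p.coeff 2 - p.coeff 1 ^ 2) * q.coeff 0 ^ 2 ≤
      (2 * q.coeff 0 * q.coeff 2 - q.coeff 1 ^ 2) * p.coeff 0 ^ 2 := by
  obtain ⟨p0, p1, p2⟩ := coeff_mul_comp_neg_X p
  obtain ⟨q0, q1, q2⟩ := coeff_mul_comp_neg_X q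
  have := coeff_two_nonneg
    (r := q * q.comp (-X) * C (p.coeff 0 ^ 2) - p * p.comp (-X) * C (q.coeff 0 ^ 2)) ?_ ?_ ?_
  · rw [coeff_sub, coeff_mul_C, coeff_mul_C, p2, q2] at this
    linarith
  · rw [coeff_sub, coeff_mul_C, coeff_mul_C, p0, q0]; ring
  · rw [coeff_sub, coeff_mul_C, coeff_mul_C, p1, q1]; ring
  · filter_upwards [h] with t ht
    simp only [coeff_zero_eq_eval_zero, eval_sub, eval_mul, eval_comp, eval_neg, eval_X, eval_C]
    linarith

lemma eventually_forall_pos_add_smul (S : Finset ι) {a : ι → ℝ} (b : ι → ℝ)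
    (ha : ∀ i ∈ S, 0 < a i) : ∀ᶠ t : ℝ in 𝓝 0, ∀ i ∈ S, 0 < (a + t • b) i := by
  refine (Filter.eventually_all_finset S).2 fun i hi => ?_
  have hcont : Continuous fun t : ℝ => (a + t • b) i := by
    simp only [Pi.add_apply, Pi.smul_apply, smul_eq_mul]
    fun_prop
  exact hcont.tendsto 0 |>.eventually (lt_mem_nhds (by simpa using ha i hi))

variable [DecidableEq ι]

/-- The polynomial `t ↦ esym S k (a + t b)`. -/
def esymLine (S : Finset ι) (k : ℕ) (a b : ι → ℝ) : ℝ[X] :=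
  ∑ j ∈ Finset.range (k + 1), C (mixedEsym S (fun U => ∏ i ∈ U, b i) j (k - j) a) * X ^ j

lemma eval_esymLine (S : Finset ι) (k : ℕ) (a b : ι → ℝ) (t : ℝ) :
    (esymLine S k a b).eval t = esym S k (a + t • b) := by
  simp [esymLine, esym_add_smul, eval_finsetSum]

lemma coeff_esymLine (S : Finset ι) {j k : ℕ} (hj : j ≤ k) (a b : ι → ℝ) :
    (esymLine S k a b).coeff j = mixedEsym S (fun U => ∏ i ∈ U, b i) j (k - j) a := by
  simp only [esymLine, finsetSum_coeff, coeff_C_mul_X_pow]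
  rw [Finset.sum_ite_eq, if_pos (Finset.mem_range_succ_iff.2 hj)]

lemma coeff_zero_esymLine (S : Finset ι) (k : ℕ) (a b : ι → ℝ) :
    (esymLine S k a b).coeff 0 = esym S k a := by
  rw [coeff_esymLine S k.zero_le, mixedEsym_prod_zero_left, Nat.sub_zero]

lemma coeff_self_esymLine (S : Finset ι) (k : ℕ) (a b : ι → ℝ) :
    (esymLine S k a b).coeff k = esym S k b := by
  rw [coeff_esymLine S le_rfl, Nat.sub_self, mixedEsym_prod_zero_right]

lemma coeff_two_esymLine_le {S : Finset ι} {j k : ℕ} (hjk : j ≤ k) (hk : k ≤ S.card) {a : ι → ℝ}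
    (b : ι → ℝ) (ha : ∀ i ∈ S, 0 < a i) :
    (2 * esym S k a * (esymLine S k a b).coeff 2 - (esymLine S k a b).coeff 1 ^ 2) *
        esym S j a ^ 2 ≤
      (2 * esym S j a * (esymLine S j a b).coeff 2 - (esymLine S j a b).coeff 1 ^ 2) *
        esym S k a ^ 2 := by
  rw [← coeff_zero_esymLine S k a b, ← coeff_zero_esymLine S j a b]
  refine coeff_two_le_of_eventually_le ?_
  filter_upwards [eventually_forall_pos_add_smul S b ha,
    eventually_forall_pos_add_smul S (-b) ha] with t hadd hsub
  rw [show a + t • -b = a - t • b by module] at hsub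
  simpa [eval_esymLine, ← sub_eq_add_neg] using esym_mul_esym_le hjk hk hadd hsub

variable {S : Finset ι} {k : ℕ} {a b : ι → ℝ}

lemma coeff_two_esymLine_nonpos (hk : 1 ≤ k) (hkS : k ≤ S.card) (ha : ∀ i ∈ S, 0 < a i)
    (h1 : (esymLine S k a b).coeff 1 = 0) :
    (esymLine S k a b).coeff 2 ≤ 0 ∧ ((esymLine S k a b).coeff 2 = 0 → ∑ i ∈ S, b i = 0) := by
  have hcmp := coeff_two_esymLine_le hk hkS b ha
  have hdeg : (esymLine S 1 a b).coeff 2 = 0 := by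
    simp [esymLine, Finset.sum_range_succ]
  rw [h1, hdeg, coeff_self_esymLine, esym_one S b] at hcmp
  have hposk : 0 < esym S k a := esym_pos hkS ha
  have hpos1 : 0 < esym S 1 a := esym_pos (hk.trans hkS) ha
  have hle : 2 * esym S k a * esym S 1 a ^ 2 * (esymLine S k a b).coeff 2 ≤
      -((∑ i ∈ S, b i) * esym S k a) ^ 2 := by linarith
  refine ⟨?_, fun h2 => ?_⟩
  · exact nonpos_of_mul_nonpos_right (hle.trans (neg_nonpos.2 (sq_nonneg _))) (by positivity)
  · rw [h2, mul_zero] at hle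
    exact (mul_eq_zero.1 (pow_eq_zero_iff two_ne_zero |>.1 (le_antisymm (by linarith)
      (sq_nonneg _)))).resolve_right hposk.ne'

lemma eq_zero_of_coeff_esymLine_eq_zero (hk : 2 ≤ k) (hkS : k ≤ S.card) (ha : ∀ i ∈ S, 0 < a i)
    (h1 : (esymLine S k a b).coeff 1 = 0) (h2 : (esymLine S k a b).coeff 2 = 0) :
    ∀ i ∈ S, b i = 0 := by
  have hsum := (coeff_two_esymLine_nonpos (by omega) hkS ha h1).2 h2
  have hcmp := coeff_two_esymLine_le hk hkS b ha
  rw [h1, h2, coeff_self_esymLine] at hcmp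
  have hposk : 0 < esym S k a := esym_pos hkS ha
  have hpos2 : 0 < esym S 2 a := esym_pos (hk.trans hkS) ha
  have hnonneg : 0 ≤ esym S 2 b := by
    have h : 0 ≤ 2 * esym S 2 a * esym S 2 b - (esymLine S 2 a b).coeff 1 ^ 2 :=
      nonneg_of_mul_nonneg_left (by linarith) (pow_pos hposk 2)
    exact nonneg_of_mul_nonneg_right
      (show 0 ≤ 2 * esym S 2 a * esym S 2 b by linarith [sq_nonneg ((esymLine S 2 a b).coeff 1)])
      (by positivity)
  have hsq : ∑ i ∈ S, b i ^ 2 = 0 := by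
    have := two_mul_esym_two S b
    rw [hsum] at this
    exact le_antisymm (by linarith) (Finset.sum_nonneg fun i _ => sq_nonneg _)
  exact fun i hi => pow_eq_zero_iff two_ne_zero |>.1
    ((Finset.sum_eq_zero_iff_of_nonneg fun i _ => sq_nonneg (b i)).1 hsq i hi)

/-- Strict concavity of `σ_k` on the positive orthant, transversally to its level sets. -/
lemma mixedEsym_prod_two_nonpos (hk : 2 ≤ k) (hkS : k ≤ S.card) (ha : ∀ i ∈ S, 0 < a i)
    (h1 : mixedEsym S (fun U => ∏ i ∈ U, b i) 1 (k - 1) a = 0) :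
    mixedEsym S (fun U => ∏ i ∈ U, b i) 2 (k - 2) a ≤ 0 ∧
      (mixedEsym S (fun U => ∏ i ∈ U, b i) 2 (k - 2) a = 0 → ∀ i ∈ S, b i = 0) := by
  rw [← coeff_esymLine S (by omega)] at h1
  rw [← coeff_esymLine S hk]
  exact ⟨(coeff_two_esymLine_nonpos (by omega) hkS ha h1).1,
    eq_zero_of_coeff_esymLine_eq_zero hk hkS ha h1⟩

end SecondVariation

/-! ### Determinantal pencils -/

section Jacobi

variable {ι R S : Type*} [CommRing R] [CommRing S] [Algebra R S]

lemma derivation_prod [DecidableEq ι] (D : Derivation R S S) (s : Finset ι) (f : ι → S) :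
    D (∏ i ∈ s, f i) = ∑ i ∈ s, (∏ j ∈ s.erase i, f j) * D (f i) := by
  induction s using Finset.induction_on with
  | empty => simp
  | insert a s ha ih =>
    rw [Finset.prod_insert ha, D.leibniz, ih, Finset.sum_insert ha, Finset.erase_insert ha,
      smul_eq_mul, smul_eq_mul, Finset.mul_sum, add_comm]
    congr 1
    refine Finset.sum_congr rfl fun i hi => ?_
    have hia : a ≠ i := fun h => ha (h ▸ hi)
    rw [Finset.erase_insert_of_ne hia, Finset.prod_insert (by simp [ha])]
    ring

/-- Jacobi's formula. -/
lemma derivation_det [Fintype ι] [DecidableEq ι] (D : Derivation R S S) (M : Matrix ι ι S) :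
    D M.det = (M.adjugate * M.map D).trace := by
  have hdiag : ∀ i, (M.adjugate * M.map D).diag i = (M.updateCol i fun j => D (M j i)).det := by
    intro i
    rw [← Matrix.cramer_apply, Matrix.cramer_eq_adjugate_mulVec]
    rfl
  simp_rw [Matrix.trace, hdiag, Matrix.det_apply]
  rw [map_sum, Finset.sum_comm]
  refine Finset.sum_congr rfl fun σ _ => ?_
  rw [Units.smul_def, map_zsmul, derivation_prod, ← Finset.smul_sum]
  congr 1
  refine Finset.sum_congr rfl fun i _ => ?_
  rw [← Finset.mul_prod_erase _ _ (Finset.mem_univ i), mul_comm]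
  congr 1
  · simp
  · exact Finset.prod_congr rfl fun j hj => by rw [Matrix.updateCol_ne (Finset.ne_of_mem_erase hj)]

end Jacobi

section Pencil

open MvPolynomial

variable {σ ι R : Type*} [Fintype σ] [Fintype ι] [DecidableEq ι] [CommRing R]

/-- The determinant of the pencil `∑ X_i A_i`; its coefficients are, up to multinomial factors, the
mixed discriminants of the matrices `A i`. -/
def detPencil (A : σ → Matrix ι ι R) : MvPolynomial σ R :=
  (∑ i, (X i : MvPolynomial σ R) • (A i).map C).det

lemma eval_detPencil (A : σ → Matrix ι ι R) (v : σ → R) :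
    eval v (detPencil A) = (∑ i, v i • A i).det := by
  rw [detPencil, RingHom.map_det]
  congr 1
  ext p q
  simp [Matrix.sum_apply]

lemma eval_pderiv_detPencil (A : σ → Matrix ι ι R) (v : σ → R) (i : σ) :
    eval v (pderiv i (detPencil A)) = ((∑ j, v j • A j).adjugate * A i).trace := by
  classical
  set M : Matrix ι ι (MvPolynomial σ R) := ∑ i, (X i : MvPolynomial σ R) • (A i).map C with hM
  have heval : (eval v).mapMatrix M = ∑ j, v j • A j := by
    ext p q
    simp [hM, Matrix.sum_apply]
  have hderiv : M.map (pderiv i) = (A i).map C := by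
    ext p q : 2
    simp [hM, Matrix.sum_apply, pderiv_X, Pi.single_apply]
  rw [detPencil, derivation_det, ← hM, hderiv, Matrix.trace, Matrix.trace, map_sum, ← heval,
    ← RingHom.map_adjugate]
  refine Finset.sum_congr rfl fun p _ => ?_
  simp [Matrix.mul_apply]

lemma map_detPencil {S : Type*} [CommRing S] (f : R →+* S) (A : σ → Matrix ι ι R) :
    map f (detPencil A) = detPencil fun i => (A i).map f := by
  rw [detPencil, detPencil, RingHom.map_det]
  congr 1
  ext p q
  simp [Matrix.sum_apply]

lemma detPencil_transpose_mul_mul (A : σ → Matrix ι ι R) (T : Matrix ι ι R) :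
    detPencil (fun i => T.transpose * A i * T) = C (T.det ^ 2) * detPencil A := by
  have hsum : ∑ i, (X i : MvPolynomial σ R) • (T.transpose * A i * T).map C =
      (T.map (C : R →+* MvPolynomial σ R)).transpose *
        (∑ i, (X i : MvPolynomial σ R) • (A i).map C) * T.map C := by
    simp_rw [Matrix.mul_sum, Matrix.sum_mul, Matrix.mul_smul, Matrix.smul_mul, Matrix.map_mul,
      Matrix.transpose_map]
  have hdet : (T.map (C : R →+* MvPolynomial σ R)).det = C T.det := (RingHom.map_det C T).symm
  rw [detPencil, hsum, Matrix.det_mul, Matrix.det_mul, Matrix.det_transpose, hdet, detPencil,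
    map_pow]
  ring

end Pencil

section PrincipalMinor

variable {ι R : Type*} [DecidableEq ι] [CommRing R]

/-- The minor of `B` with rows and columns in `S`. -/
def principalMinor (B : Matrix ι ι R) (S : Finset ι) : R :=
  (B.submatrix (↑) (↑) : Matrix S S R).det

lemma map_principalMinor {R' : Type*} [CommRing R'] (f : R →+* R') (B : Matrix ι ι R)
    (S : Finset ι) : principalMinor (B.map f) S = f (principalMinor B S) :=
  (RingHom.map_det f _).symm

lemma principalMinor_singleton (B : Matrix ι ι R) (i : ι) : principalMinor B {i} = B i i :=
  Matrix.det_unique _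

lemma principalMinor_pair (B : Matrix ι ι R) {i j : ι} (hij : i ≠ j) :
    principalMinor B {i, j} = B i i * B j j - B i j * B j i := by
  let f : Fin 2 → ({i, j} : Finset ι) := ![⟨i, by simp⟩, ⟨j, by simp⟩]
  have hf : Function.Bijective f := by
    refine (Fintype.bijective_iff_injective_and_card f).2 ⟨fun p q h => ?_, ?_⟩
    · fin_cases p <;> fin_cases q <;> simp_all [f, hij.symm]
    · simp [Finset.card_pair hij]
  rw [principalMinor, ← Matrix.det_submatrix_equiv_self (Equiv.ofBijective f hf),
    Matrix.det_fin_two]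
  rfl

variable [Fintype ι]

lemma det_diagonal_add_smul (d : ι → R) (x : R) (B : Matrix ι ι R) :
    (Matrix.diagonal d + x • B).det =
      ∑ S : Finset ι, x ^ S.card * (∏ i ∈ Finset.univ \ S, d i) * principalMinor B S := by
  rw [add_comm]
  refine (Matrix.detRowAlternating.toMultilinearMap.map_add_univ (x • B)
    (Matrix.diagonal d)).trans (Finset.sum_congr rfl fun S _ => ?_)
  have hrows : Matrix.of (S.piecewise (x • B) (Matrix.diagonal d)) =
      Matrix.of fun i j => S.piecewise (fun _ => x) d i *
        Matrix.of (S.piecewise B.row (1 : Matrix ι ι R).row) i j := by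
    ext i j
    by_cases hi : i ∈ S <;>
      simp [hi, Finset.piecewise, Matrix.diagonal_apply, Matrix.one_apply]
  calc (Matrix.of (S.piecewise (x • B) (Matrix.diagonal d))).det
      = (∏ i, S.piecewise (fun _ => x) d i) * principalMinor B S := by
        rw [hrows, Matrix.det_mul_column, Matrix.det_piecewise_one_eq_submatrix_det,
          principalMinor]
    _ = _ := by rw [Finset.prod_piecewise]; simp

end PrincipalMinor

section TernaryPencil

open MvPolynomial

variable {ι R : Type*} [Fintype ι] [DecidableEq ι] [CommRing R]

/-- The exponent of the monomial `X₀ ^ a * X₁ ^ b * X₂ ^ c`. -/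
def ternaryExp (a b c : ℕ) : Fin 3 →₀ ℕ := Finsupp.equivFunOnFinite.symm ![a, b, c]

lemma ternaryExp_inj {a b c a' b' c' : ℕ} :
    ternaryExp a b c = ternaryExp a' b' c' ↔ a = a' ∧ b = b' ∧ c = c' := by
  rw [ternaryExp, ternaryExp, Equiv.apply_eq_iff_eq]
  simp [Matrix.vecCons_inj]

lemma monomial_ternaryExp (a b c : ℕ) (r : R) :
    monomial (ternaryExp a b c) r = C r * (X 0 ^ a * X 1 ^ b * X 2 ^ c) := by
  rw [monomial_eq, Finsupp.prod_fintype _ _ (by simp)]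
  simp [Fin.prod_univ_three, ternaryExp]

lemma detPencil_one_diagonal (a : ι → R) (B : Matrix ι ι R) :
    detPencil ![1, Matrix.diagonal a, B] =
      ∑ S : Finset ι, ∑ U ∈ (Finset.univ \ S).powerset,
        monomial (ternaryExp (Fintype.card ι - S.card - U.card) U.card S.card)
          (principalMinor B S * ∏ i ∈ U, a i) := by
  have hpencil : ∑ i, (X i : MvPolynomial (Fin 3) R) •
      ((![1, Matrix.diagonal a, B] : Fin 3 → Matrix ι ι R) i).map C =
      Matrix.diagonal (fun i => X 1 * C (a i) + X 0) +
        (X 2 : MvPolynomial (Fin 3) R) • B.map (C : R →+* MvPolynomial (Fin 3) R) := by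
    ext i j : 2
    by_cases hij : i = j
    · simp [Fin.sum_univ_three, hij, add_comm]
    · simp [Fin.sum_univ_three, hij]
  rw [detPencil, hpencil, det_diagonal_add_smul]
  refine Finset.sum_congr rfl fun S _ => ?_
  rw [map_principalMinor, Finset.prod_add, Finset.mul_sum, Finset.sum_mul]
  refine Finset.sum_congr rfl fun U hU => ?_
  rw [Finset.prod_mul_distrib, Finset.prod_const, Finset.prod_const, monomial_ternaryExp,
    Finset.card_sdiff_of_subset (Finset.mem_powerset.1 hU),
    Finset.card_sdiff_of_subset S.subset_univ, Finset.card_univ, map_mul, map_prod]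
  ring

lemma coeff_detPencil_one_diagonal {j k : ℕ} (hj : j ≤ k) (hk : k ≤ Fintype.card ι) (a : ι → R)
    (B : Matrix ι ι R) :
    (detPencil ![1, Matrix.diagonal a, B]).coeff (ternaryExp (Fintype.card ι - k) (k - j) j) =
      mixedEsym Finset.univ (principalMinor B) j (k - j) a := by
  have hcond : ∀ S U : Finset ι,
      ternaryExp (Fintype.card ι - S.card - U.card) U.card S.card =
        ternaryExp (Fintype.card ι - k) (k - j) j ↔ S.card = j ∧ U.card = k - j := by
    intro S U
    rw [ternaryExp_inj]
    omega
  simp only [detPencil_one_diagonal, coeff_sum, coeff_monomial, hcond, ite_and, mixedEsym, esym,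
    ← Finset.powerset_univ, Finset.powersetCard_eq_filter, Finset.sum_filter, Finset.mul_sum]
  refine Finset.sum_congr rfl fun S _ => ?_
  split_ifs <;> simp [mul_ite]

end TernaryPencil
/-! ### Pointwise concavity of mixed discriminants -/

section SimultaneousDiagonalization

variable {ι : Type*} [Fintype ι] [DecidableEq ι]

lemma exists_transpose_mul_mul_eq_one {A : Matrix ι ι ℝ} (hA : A.PosDef) :
    ∃ P : Matrix ι ι ℝ, P.det ≠ 0 ∧ P.transpose * A * P = 1 := by
  open scoped MatrixOrder Matrix.Norms.L2Operator in
  obtain ⟨B, hB, rfl⟩ := CStarAlgebra.isStrictlyPositive_iff_eq_star_mul_self.1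
    hA.isStrictlyPositive
  lift B to (Matrix ι ι ℝ)ˣ using hB
  refine ⟨(↑B⁻¹ : Matrix ι ι ℝ), ((Matrix.isUnit_iff_isUnit_det _).1 B⁻¹.isUnit).ne_zero, ?_⟩
  rw [Matrix.star_eq_conjTranspose, Matrix.conjTranspose_eq_transpose_of_trivial,
    ← Matrix.mul_assoc, ← Matrix.transpose_mul, B.mul_inv, Matrix.transpose_one, Matrix.one_mul,
    B.mul_inv]

lemma exists_orthogonal_diagonal {A : Matrix ι ι ℝ} (hA : A.IsHermitian) :
    ∃ U : Matrix ι ι ℝ, U.transpose * U = 1 ∧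
      U.transpose * A * U = Matrix.diagonal hA.eigenvalues := by
  refine ⟨hA.eigenvectorUnitary, (Unitary.mem_iff.1 hA.eigenvectorUnitary.2).1, ?_⟩
  have hdiag := hA.conjStarAlgAut_star_eigenvectorUnitary
  rwa [Unitary.conjStarAlgAut_star_apply] at hdiag

lemma exists_simultaneous_diagonal {A₀ A₁ : Matrix ι ι ℝ} (h0 : A₀.PosDef) (h1 : A₁.PosDef) :
    ∃ (T : Matrix ι ι ℝ) (a : ι → ℝ), T.det ≠ 0 ∧ (∀ i, 0 < a i) ∧
      T.transpose * A₀ * T = 1 ∧ T.transpose * A₁ * T = Matrix.diagonal a := by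
  obtain ⟨P, hP, hP0⟩ := exists_transpose_mul_mul_eq_one h0
  have hN : (P.transpose * A₁ * P).PosDef := by
    have hposDef := h1.conjTranspose_mul_mul_same (B := P)
      (Matrix.mulVec_injective_of_isUnit ((Matrix.isUnit_iff_isUnit_det _).2 hP.isUnit))
    rwa [Matrix.conjTranspose_eq_transpose_of_trivial] at hposDef
  obtain ⟨U, hUU, hUdiag⟩ := exists_orthogonal_diagonal hN.1
  have hU : U.det ≠ 0 := Matrix.det_ne_zero_of_left_inverse hUU
  have hconj (A : Matrix ι ι ℝ) :
      (P * U).transpose * A * (P * U) = U.transpose * (P.transpose * A * P) * U := by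
    simp only [Matrix.transpose_mul, Matrix.mul_assoc]
  refine ⟨P * U, hN.1.eigenvalues, ?_, hN.eigenvalues_pos, ?_, ?_⟩
  · rw [Matrix.det_mul]
    exact mul_ne_zero hP hU
  · rw [hconj, hP0, Matrix.mul_one, hUU]
  · rw [hconj, hUdiag]

end SimultaneousDiagonalization

section MinorSums

variable {ι : Type*} [DecidableEq ι]

lemma mixedEsym_principalMinor_one {R : Type*} [CommRing R] (S : Finset ι) (B : Matrix ι ι R)
    (l : ℕ) (a : ι → R) :
    mixedEsym S (principalMinor B) 1 l a = mixedEsym S (fun U => ∏ i ∈ U, B i i) 1 l a := by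
  refine Finset.sum_congr rfl fun U hU => ?_
  obtain ⟨i, rfl⟩ := Finset.card_eq_one.1 (Finset.mem_powersetCard.1 hU).2
  simp only [principalMinor_singleton, Finset.prod_singleton]

variable {S : Finset ι} {B : Matrix ι ι ℝ} {l : ℕ} {a : ι → ℝ}

lemma principalMinor_pair_of_isSymm (hB : B.IsSymm) {i j : ι} (hij : i ≠ j) :
    principalMinor B {i, j} = ∏ p ∈ {i, j}, B p p - B i j ^ 2 := by
  rw [principalMinor_pair B hij, Finset.prod_pair hij, hB.apply i j, sq]

lemma principalMinor_mul_esym_le (hB : B.IsSymm) (ha : ∀ i ∈ S, 0 < a i) (hl : l + 2 ≤ S.card) :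
    ∀ U ∈ S.powersetCard 2,
      principalMinor B U * esym (S \ U) l a ≤ (∏ i ∈ U, B i i) * esym (S \ U) l a := by
  intro U hU
  obtain ⟨hUS, hcard⟩ := Finset.mem_powersetCard.1 hU
  have hesym : 0 ≤ esym (S \ U) l a :=
    (esym_pos (by rw [Finset.card_sdiff_of_subset hUS]; omega)
      fun i hi => ha i (Finset.mem_sdiff.1 hi).1).le
  obtain ⟨i, j, hij, rfl⟩ := Finset.card_eq_two.1 hcard
  rw [principalMinor_pair_of_isSymm hB hij]
  exact mul_le_mul_of_nonneg_right (sub_le_self _ (sq_nonneg _)) hesym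

lemma mixedEsym_principalMinor_two_le (hB : B.IsSymm) (ha : ∀ i ∈ S, 0 < a i)
    (hl : l + 2 ≤ S.card) :
    mixedEsym S (principalMinor B) 2 l a ≤ mixedEsym S (fun U => ∏ i ∈ U, B i i) 2 l a :=
  Finset.sum_le_sum (principalMinor_mul_esym_le hB ha hl)

lemma eq_zero_of_mixedEsym_principalMinor_two_eq (hB : B.IsSymm) (ha : ∀ i ∈ S, 0 < a i)
    (hl : l + 2 ≤ S.card)
    (h : mixedEsym S (principalMinor B) 2 l a = mixedEsym S (fun U => ∏ i ∈ U, B i i) 2 l a)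
    {i j : ι} (hi : i ∈ S) (hj : j ∈ S) (hij : i ≠ j) : B i j = 0 := by
  have hsub : {i, j} ⊆ S := Finset.insert_subset hi (Finset.singleton_subset_iff.2 hj)
  have hcard := Finset.card_pair hij
  have hterm := (Finset.sum_eq_sum_iff_of_le (principalMinor_mul_esym_le hB ha hl)).1 h {i, j}
    (Finset.mem_powersetCard.2 ⟨hsub, hcard⟩)
  have hesym : 0 < esym (S \ {i, j}) l a :=
    esym_pos (by rw [Finset.card_sdiff_of_subset hsub]; omega)
      fun i hi => ha i (Finset.mem_sdiff.1 hi).1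
  have hminor := mul_right_cancel₀ hesym.ne' hterm
  rw [principalMinor_pair_of_isSymm hB hij] at hminor
  exact pow_eq_zero_iff two_ne_zero |>.1 (by linarith)

end MinorSums

section MixedDiscriminants

variable {ι : Type*} [Fintype ι] [DecidableEq ι] {A₀ A₁ A₂ : Matrix ι ι ℝ}

lemma mixedEsym_principalMinor_of_diagonal {T : Matrix ι ι ℝ} {a : ι → ℝ}
    (hT0 : T.transpose * A₀ * T = 1) (hT1 : T.transpose * A₁ * T = Matrix.diagonal a)
    (A₂ : Matrix ι ι ℝ) {k j : ℕ} (hj : j ≤ k) (hk : k ≤ Fintype.card ι) :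
    mixedEsym Finset.univ (principalMinor (T.transpose * A₂ * T)) j (k - j) a =
      T.det ^ 2 *
        (detPencil ![A₀, A₁, A₂]).coeff (ternaryExp (Fintype.card ι - k) (k - j) j) := by
  rw [← MvPolynomial.coeff_C_mul, ← detPencil_transpose_mul_mul,
    ← coeff_detPencil_one_diagonal hj hk]
  congr 2
  ext i : 1
  fin_cases i <;> simp [hT0, hT1]

-- The strict equality case is what forces the Hessian of a kernel element to vanish.
lemma coeff_detPencil_two_nonpos (h0 : A₀.PosDef) (h1 : A₁.PosDef) (h2 : A₂.IsSymm) {k : ℕ}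
    (hk : 2 ≤ k) (hkn : k ≤ Fintype.card ι)
    (hc : (detPencil ![A₀, A₁, A₂]).coeff (ternaryExp (Fintype.card ι - k) (k - 1) 1) = 0) :
    (detPencil ![A₀, A₁, A₂]).coeff (ternaryExp (Fintype.card ι - k) (k - 2) 2) ≤ 0 ∧
      ((detPencil ![A₀, A₁, A₂]).coeff (ternaryExp (Fintype.card ι - k) (k - 2) 2) = 0 →
        A₂ = 0) := by
  obtain ⟨T, a, hT, ha, hT0, hT1⟩ := exists_simultaneous_diagonal h0 h1
  set B := T.transpose * A₂ * T with hB
  have hBsymm : B.IsSymm := by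
    rw [Matrix.IsSymm, hB]
    simp only [Matrix.transpose_mul, Matrix.transpose_transpose, h2.eq, Matrix.mul_assoc]
  have hdet : 0 < T.det ^ 2 := by positivity
  have ha' : ∀ i ∈ Finset.univ, 0 < a i := fun i _ => ha i
  have hone : mixedEsym Finset.univ (fun U => ∏ i ∈ U, B i i) 1 (k - 1) a = 0 := by
    rw [← mixedEsym_principalMinor_one,
      mixedEsym_principalMinor_of_diagonal hT0 hT1 A₂ (by omega) hkn, hc, mul_zero]
  have htwo := mixedEsym_principalMinor_of_diagonal hT0 hT1 A₂ hk hkn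
  rw [← hB] at htwo
  obtain ⟨hdiag_nonpos, hdiag_zero⟩ := mixedEsym_prod_two_nonpos hk hkn ha' hone
  have hle := mixedEsym_principalMinor_two_le hBsymm ha' (l := k - 2)
    (by rw [Finset.card_univ]; omega)
  refine ⟨nonpos_of_mul_nonpos_right (htwo.symm.trans_le (hle.trans hdiag_nonpos)) hdet,
    fun hz => ?_⟩
  rw [hz, mul_zero] at htwo
  have hBzero : B = 0 := by
    ext i j
    by_cases hij : i = j
    · exact hij ▸ hdiag_zero (by linarith) i (Finset.mem_univ i)
    · exact eq_zero_of_mixedEsym_principalMinor_two_eq hBsymm ha' (l := k - 2)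
        (by rw [Finset.card_univ]; omega) (by linarith) (Finset.mem_univ i) (Finset.mem_univ j) hij
  have hTunit : IsUnit T := (Matrix.isUnit_iff_isUnit_det _).2 hT.isUnit
  rwa [hB, hTunit.mul_left_eq_zero, ((Matrix.isUnit_transpose T).2 hTunit).mul_right_eq_zero]
    at hBzero

lemma mixedEsym_one_one (μ : Finset ι → ℝ) (a : ι → ℝ) :
    mixedEsym Finset.univ μ 1 1 (fun _ => 1) =
      (Fintype.card ι - 1 : ℝ) * mixedEsym Finset.univ μ 1 0 a := by
  rw [mixedEsym, mixedEsym, Finset.mul_sum]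
  refine Finset.sum_congr rfl fun U hU => ?_
  have hcard := (Finset.mem_powersetCard.1 hU).2
  have hle : 1 ≤ Fintype.card ι := hcard ▸ Finset.card_le_univ U
  rw [esym_zero, esym_one, Finset.sum_const, Finset.card_sdiff_of_subset (Finset.subset_univ U),
    Finset.card_univ, hcard, nsmul_eq_mul, Nat.cast_sub hle]
  push_cast
  ring

-- Both coefficients are multiples of the trace of `A₂` relative to `A₀`.
lemma coeff_detPencil_self_eq_zero (h0 : A₀.PosDef) (h1 : A₁.PosDef) (hn : 2 ≤ Fintype.card ι)
    (hc : (detPencil ![A₀, A₁, A₂]).coeff (ternaryExp (Fintype.card ι - 1) 0 1) = 0) :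
    (detPencil ![A₀, A₀, A₂]).coeff (ternaryExp (Fintype.card ι - 2) 1 1) = 0 := by
  obtain ⟨T, a, hT, -, hT0, hT1⟩ := exists_simultaneous_diagonal h0 h1
  have hT0' : T.transpose * A₀ * T = Matrix.diagonal fun _ => (1 : ℝ) := by
    rw [hT0, Matrix.diagonal_one]
  have hone := mixedEsym_principalMinor_of_diagonal hT0 hT1 A₂ (le_refl 1) (by omega)
  have htwo := mixedEsym_principalMinor_of_diagonal hT0 hT0' A₂ one_le_two hn
  rw [Nat.sub_self, hc, mul_zero] at hone
  rw [show 2 - 1 = 1 from rfl, mixedEsym_one_one _ a, hone, mul_zero] at htwo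
  exact (mul_eq_zero.1 htwo.symm).resolve_left (pow_ne_zero 2 hT)

end MixedDiscriminants

section CoefficientFunctionals

open MvPolynomial

variable {σ K A : Type*} [CommSemiring K] [CommSemiring A] [Algebra K A]

/-- Apply a linear functional to each coefficient of a polynomial. -/
def mapCoeff (φ : A →ₗ[K] K) (P : MvPolynomial σ A) : MvPolynomial σ K :=
  AddMonoidAlgebra.map φ.toAddMonoidHom P

lemma coeff_mapCoeff (φ : A →ₗ[K] K) (P : MvPolynomial σ A) (m : σ →₀ ℕ) :
    (mapCoeff φ P).coeff m = φ (P.coeff m) :=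
  coeff_addMonoidAlgebraMap _ _ _

lemma eval_mapCoeff (φ : A →ₗ[K] K) (P : MvPolynomial σ A) (v : σ → K) :
    eval v (mapCoeff φ P) = φ (eval (fun i => algebraMap K A (v i)) P) := by
  have hsmul (m : σ →₀ ℕ) : P.coeff m * ∏ i ∈ m.support, algebraMap K A (v i) ^ m i =
      (∏ i ∈ m.support, v i ^ m i) • P.coeff m := by
    rw [Algebra.smul_def, map_prod, mul_comm]
    simp_rw [map_pow]
  have hsupp : (mapCoeff φ P).support ⊆ P.support := fun m hm => by
    rw [mem_support_iff, coeff_mapCoeff] at hm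
    exact mem_support_iff.2 fun h => hm (by rw [h, map_zero])
  rw [eval_eq, eval_eq, map_sum, Finset.sum_subset hsupp]
  · refine Finset.sum_congr rfl fun m _ => ?_
    rw [coeff_mapCoeff, hsmul, map_smul, smul_eq_mul, mul_comm]
  · intro m _ hm
    rw [notMem_support_iff.1 hm, zero_mul]

lemma mapCoeff_pderiv (φ : A →ₗ[K] K) (P : MvPolynomial σ A) (i : σ) :
    mapCoeff φ (pderiv i P) = pderiv i (mapCoeff φ P) := by
  ext m
  have hsmul : P.coeff (m + Finsupp.single i 1) * ((m i : A) + 1) =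
      ((m i : K) + 1) • P.coeff (m + Finsupp.single i 1) := by
    rw [Algebra.smul_def, mul_comm]
    simp
  rw [coeff_mapCoeff, coeff_pderiv, coeff_pderiv, coeff_mapCoeff, hsmul, map_smul, smul_eq_mul,
    mul_comm]

end CoefficientFunctionals
/-! ### Jacobian determinants of perturbed dilations -/

section PerturbedDilation

open scoped NNReal

variable {E : Type*} [NormedAddCommGroup E] [NormedSpace ℝ E]

lemma bijective_smul_add [CompleteSpace E] {K : ℝ≥0} {c : ℝ} {Φ : E → E}
    (hΦ : LipschitzWith K Φ) (hc : (K : ℝ) < c) :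
    Function.Bijective fun y => c • y + Φ y := by
  have hc0 : 0 < c := K.2.trans_lt hc
  let e : E ≃L[ℝ] E := ContinuousLinearEquiv.smulLeft (Units.mk0 c hc0.ne')
  have happrox : ApproximatesLinearOn (fun y => c • y + Φ y) (e : E →L[ℝ] E) univ K := by
    intro y _ z _
    have hsub : c • y + Φ y - (c • z + Φ z) - c • (y - z) = Φ y - Φ z := by
      rw [smul_sub]
      abel
    exact (congrArg norm hsub).trans_le (hΦ.norm_sub_le y z)
  have hsymm : Subsingleton E ∨ K < ‖(e.symm : E →L[ℝ] E)‖₊⁻¹ := by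
    refine (subsingleton_or_nontrivial E).imp_right fun (_ : Nontrivial E) => ?_
    have hle : ‖(e.symm : E →L[ℝ] E)‖ ≤ c⁻¹ :=
      ContinuousLinearMap.opNorm_le_bound _ (inv_nonneg.2 hc0.le) fun y =>
        (norm_smul_of_nonneg (inv_nonneg.2 hc0.le) y).le
    rw [← NNReal.coe_lt_coe, NNReal.coe_inv, coe_nnnorm]
    exact hc.trans_le ((le_inv_comm₀ hc0 e.symm.norm_pos).2 hle)
  exact ⟨injOn_univ.1 (injOn_iff_injective.2 (happrox.injective hsymm)),
    happrox.surjective hsymm⟩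

lemma image_ball_of_eqOn_smul {ψ : E → E} {c r : ℝ} (hψ : Function.Bijective ψ) (hc : 0 < c)
    (hout : EqOn ψ (c • ·) (Metric.ball 0 r)ᶜ) :
    ψ '' Metric.ball 0 r = Metric.ball 0 (c * r) := by
  rw [← compl_inj_iff, ← image_compl_eq hψ, hout.image_eq,
    image_compl_eq (MulAction.bijective₀ hc.ne'), image_smul, smul_ball hc.ne', smul_zero,
    Real.norm_of_nonneg hc.le]

variable [FiniteDimensional ℝ E]

lemma det_smul_id_add_pos {c : ℝ} {L : E →L[ℝ] E} (hL : ‖L‖ < c) :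
    0 < (c • ContinuousLinearMap.id ℝ E + L).det := by
  have hc : 0 < c := (norm_nonneg _).trans_lt hL
  set f : ℝ → ℝ := fun τ => (c • ContinuousLinearMap.id ℝ E + τ • L).det with hf
  have hcont : Continuous f := ContinuousLinearMap.continuous_det.comp (by fun_prop)
  have hne : ∀ τ ∈ Icc (0 : ℝ) 1, f τ ≠ 0 := by
    intro τ hτ hdet
    obtain ⟨v, hv, hv0⟩ := (Submodule.ne_bot_iff _).1 (LinearMap.bot_lt_ker_of_det_eq_zero hdet).ne'
    have heq : c • v = -(τ • L v) := eq_neg_of_add_eq_zero_left (by simpa using hv)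
    have hnorm : c * ‖v‖ = τ * ‖L v‖ := by
      simpa [norm_smul, abs_of_pos hc, abs_of_nonneg hτ.1] using congrArg norm heq
    have hlt : τ * ‖L v‖ < c * ‖v‖ :=
      calc τ * ‖L v‖ ≤ ‖L v‖ := mul_le_of_le_one_left (norm_nonneg _) hτ.2
        _ ≤ ‖L‖ * ‖v‖ := L.le_opNorm v
        _ < c * ‖v‖ := mul_lt_mul_of_pos_right hL (norm_pos_iff.2 hv0)
    exact hlt.ne' hnorm
  have hzero : 0 < f 0 := by
    have hdet : f 0 = c ^ Module.finrank ℝ E := by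
      simp [hf, ContinuousLinearMap.det]
    rw [hdet]
    positivity
  by_contra hneg
  have hone : f 1 ≤ 0 := by simpa [hf] using hneg
  obtain ⟨τ, hτ, hτ0⟩ := intermediate_value_Icc' zero_le_one hcont.continuousOn ⟨hone, hzero.le⟩
  exact hne τ hτ hτ0

variable [MeasurableSpace E] [BorelSpace E] (μ : Measure E) [μ.IsAddHaarMeasure]

lemma integral_det_smul_id_add_fderiv {K : ℝ≥0} {c r : ℝ} {Φ : E → E} (hΦd : Differentiable ℝ Φ)
    (hΦ : LipschitzWith K Φ) (hc : (K : ℝ) < c) (hout : ∀ y, r ≤ ‖y‖ → Φ y = 0) :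
    ∫ y in Metric.ball 0 r, (c • ContinuousLinearMap.id ℝ E + fderiv ℝ Φ y).det ∂μ =
      c ^ Module.finrank ℝ E * μ.real (Metric.ball 0 r) := by
  have hc0 : 0 < c := K.2.trans_lt hc
  have hbij := bijective_smul_add hΦ hc
  have himage : (fun y => c • y + Φ y) '' Metric.ball 0 r = Metric.ball 0 (c * r) :=
    image_ball_of_eqOn_smul hbij hc0 fun y hy => by
      simp [hout y (by simpa using hy)]
  have hderiv : ∀ y ∈ Metric.ball (0 : E) r, HasFDerivWithinAt (fun y => c • y + Φ y)
      (c • ContinuousLinearMap.id ℝ E + fderiv ℝ Φ y) (Metric.ball 0 r) y := fun y _ =>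
    (((hasFDerivAt_id y).const_smul c).add (hΦd y).hasFDerivAt).hasFDerivWithinAt
  have hvar := integral_image_eq_integral_abs_det_fderiv_smul μ measurableSet_ball hderiv
    hbij.1.injOn (fun _ => (1 : ℝ))
  have hpos : ∀ y, 0 < (c • ContinuousLinearMap.id ℝ E + fderiv ℝ Φ y).det := fun y =>
    det_smul_id_add_pos ((norm_fderiv_le_of_lipschitz ℝ hΦ).trans_lt hc)
  simp_rw [himage, abs_of_pos (hpos _), smul_eq_mul, mul_one] at hvar
  rw [← hvar, setIntegral_const, smul_eq_mul, mul_one, Measure.real, Measure.real,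
    Measure.addHaar_ball_mul_of_pos _ _ hc0, ENNReal.toReal_mul,
    ENNReal.toReal_ofReal (by positivity)]

end PerturbedDilation

section Jacobian

variable {ι : Type*} [Fintype ι] {F H : EuclideanSpace ℝ ι → EuclideanSpace ℝ ι}
  {y : EuclideanSpace ℝ ι}

variable [DecidableEq ι]

/-- The Jacobian matrix of a vector field. -/
def jac (F : EuclideanSpace ℝ ι → EuclideanSpace ℝ ι) (y : EuclideanSpace ℝ ι) : Matrix ι ι ℝ :=
  LinearMap.toMatrix (EuclideanSpace.basisFun ι ℝ).toBasis (EuclideanSpace.basisFun ι ℝ).toBasis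
    (fderiv ℝ F y)

lemma jac_apply (i j : ι) : jac F y i j = fderiv ℝ F y (EuclideanSpace.single j 1) i := by
  simp [jac, LinearMap.toMatrix_apply]

lemma det_smul_one_add_jac (c : ℝ) :
    (c • 1 + jac F y).det = (c • ContinuousLinearMap.id ℝ _ + fderiv ℝ F y).det := by
  rw [ContinuousLinearMap.det, ← LinearMap.det_toMatrix (EuclideanSpace.basisFun ι ℝ).toBasis,
    ContinuousLinearMap.toLinearMap_add, ContinuousLinearMap.toLinearMap_smul,
    ContinuousLinearMap.coe_id]
  rw [map_add, map_smul, LinearMap.toMatrix_id, jac]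

lemma jac_smul_add_smul (hH : DifferentiableAt ℝ H y) (hF : DifferentiableAt ℝ F y) (a b : ℝ) :
    jac (fun y => a • H y + b • F y) y = a • jac H y + b • jac F y := by
  have h : fderiv ℝ (fun y => a • H y + b • F y) y = a • fderiv ℝ H y + b • fderiv ℝ F y :=
    ((hH.hasFDerivAt.const_smul a).add (hF.hasFDerivAt.const_smul b)).fderiv
  simp [jac, h]

lemma jac_sub (hH : DifferentiableAt ℝ H y) (hF : DifferentiableAt ℝ F y) :
    jac (H - F) y = jac H y - jac F y := by
  simp [jac, fderiv_sub hH hF]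

lemma jac_smul {η : EuclideanSpace ℝ ι → ℝ} (hη : DifferentiableAt ℝ η y)
    (hF : DifferentiableAt ℝ F y) :
    jac (fun y => η y • F y) y = η y • jac F y + Matrix.vecMulVec (F y) ⇑(gradient η y) := by
  ext i j
  have h : fderiv ℝ (fun y => η y • F y) y = η y • fderiv ℝ F y + (fderiv ℝ η y).smulRight (F y) :=
    (hη.hasFDerivAt.smul hF.hasFDerivAt).fderiv
  have hgrad : gradient η y j = fderiv ℝ η y (EuclideanSpace.single j 1) := by
    rw [← inner_gradient_left, EuclideanSpace.inner_single_right]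
    simp
  simp [jac_apply, h, hgrad, Matrix.vecMulVec_apply, mul_comm]

lemma jac_congr (h : F =ᶠ[𝓝 y] H) : jac F y = jac H y := by
  rw [jac, jac, h.fderiv_eq]

lemma jac_id : jac id y = 1 := by
  rw [jac, fderiv_id, ContinuousLinearMap.coe_id, LinearMap.toMatrix_id]

lemma continuous_jac (hF : ContDiff ℝ 1 F) : Continuous (jac F) := by
  have := hF.continuous_fderiv one_ne_zero
  refine continuous_matrix fun i j => ?_
  simp only [jac_apply]
  fun_prop

lemma continuous_trace_adjugate_jac (hH : ContDiff ℝ 1 H) (hF : ContDiff ℝ 1 F) :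
    Continuous fun y => ((jac H y).adjugate * jac F y).trace :=
  ((continuous_jac hH).matrix_adjugate.matrix_mul (continuous_jac hF)).matrix_trace

lemma continuous_dotProduct_adjugate_jac (hH : ContDiff ℝ 1 H) (hF : ContDiff ℝ 1 F) :
    Continuous fun y : EuclideanSpace ℝ ι => ⇑y ⬝ᵥ (jac H y).adjugate.mulVec (F y) :=
  (PiLp.continuous_ofLp 2 _).dotProduct ((continuous_jac hH).matrix_adjugate.matrix_mulVec
    ((PiLp.continuous_ofLp 2 _).comp hF.continuous))

end Jacobian

/-! ### Integrals of mixed discriminants of Jacobians -/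

section MatrixOfFunctions

variable {X ι : Type*} [TopologicalSpace X]

/-- A continuous matrix-valued function as a matrix of continuous functions, so that
`detPencil` and `mapCoeff` apply over the algebra `C(X, ℝ)`. -/
def contMatrix (A : C(X, Matrix ι ι ℝ)) : Matrix ι ι C(X, ℝ) :=
  Matrix.of fun i j => ⟨fun x => A x i j, A.continuous.matrix_elem i j⟩

lemma eval_algebraMap_apply {σ : Type*} (x : X) (P : MvPolynomial σ C(X, ℝ)) (v : σ → ℝ) :
    MvPolynomial.eval (fun i => algebraMap ℝ C(X, ℝ) (v i)) P x =
      MvPolynomial.eval v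
        (MvPolynomial.map (ContinuousMap.evalAlgHom ℝ ℝ x : C(X, ℝ) →+* ℝ) P) := by
  rw [MvPolynomial.eval_map]
  exact MvPolynomial.eval₂_comp_left (ContinuousMap.evalAlgHom ℝ ℝ x : C(X, ℝ) →+* ℝ) _ _ P

variable [Fintype ι] [DecidableEq ι] {σ : Type*} [Fintype σ] (A : σ → C(X, Matrix ι ι ℝ)) (x : X)

lemma map_evalAlgHom_detPencil_contMatrix :
    MvPolynomial.map (ContinuousMap.evalAlgHom ℝ ℝ x : C(X, ℝ) →+* ℝ)
      (detPencil fun i => contMatrix (A i)) = detPencil fun i => A i x := by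
  rw [map_detPencil]
  rfl

lemma coeff_detPencil_contMatrix (m : σ →₀ ℕ) :
    (detPencil fun i => contMatrix (A i)).coeff m x = (detPencil fun i => A i x).coeff m := by
  rw [← map_evalAlgHom_detPencil_contMatrix, MvPolynomial.coeff_map]
  rfl

lemma eval_detPencil_contMatrix (v : σ → ℝ) :
    MvPolynomial.eval (fun i => algebraMap ℝ C(X, ℝ) (v i))
      (detPencil fun i => contMatrix (A i)) x = (∑ i, v i • A i x).det := by
  rw [eval_algebraMap_apply, map_evalAlgHom_detPencil_contMatrix, eval_detPencil]

lemma eval_pderiv_detPencil_contMatrix (v : σ → ℝ) (i : σ) :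
    MvPolynomial.eval (fun i => algebraMap ℝ C(X, ℝ) (v i))
        (MvPolynomial.pderiv i (detPencil fun i => contMatrix (A i))) x =
      ((∑ j, v j • A j x).adjugate * A i x).trace := by
  rw [eval_algebraMap_apply, ← MvPolynomial.pderiv_map, map_evalAlgHom_detPencil_contMatrix,
    eval_pderiv_detPencil]

end MatrixOfFunctions

section NullLagrangian

lemma exists_contDiff_eventuallyEq_one {E : Type*} [NormedAddCommGroup E] [NormedSpace ℝ E]
    [FiniteDimensional ℝ E] {K U : Set E} (hK : IsCompact K) (hU : IsOpen U) (hKU : K ⊆ U)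
    (n : ℕ∞) : ∃ χ : E → ℝ, ContDiff ℝ n χ ∧ HasCompactSupport χ ∧ tsupport χ ⊆ U ∧
      ∀ y ∈ K, χ =ᶠ[𝓝 y] 1 := by
  obtain ⟨L, hL, hKL, hLU⟩ := exists_compact_between hK hU hKU
  obtain ⟨χ, hχ1, hχ0, -⟩ := exists_contMDiffMap_one_nhds_of_subset_interior (n := n)
    (modelWithCornersSelf ℝ E) hK.isClosed hKL
  have hsupp : tsupport χ ⊆ L := closure_minimal (Function.support_subset_iff'.2 hχ0) hL.isClosed
  exact ⟨χ, χ.contMDiff.contDiff, hL.of_isClosed_subset (isClosed_tsupport _) hsupp,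
    hsupp.trans hLU, fun y hy => mem_nhdsSet_iff_forall.1 hχ1 y hy⟩

variable {ι : Type*} [Fintype ι]

lemma integrableOn_ball {f : EuclideanSpace ℝ ι → ℝ} (hf : Continuous f) (r : ℝ) :
    IntegrableOn f (Metric.ball 0 r) :=
  (hf.continuousOn.integrableOn_compact (isCompact_closedBall 0 r)).mono_set
    Metric.ball_subset_closedBall

/-- Integration over a ball as a linear functional on continuous functions. -/
def ballIntegral (r : ℝ) : C(EuclideanSpace ℝ ι, ℝ) →ₗ[ℝ] ℝ where
  toFun f := ∫ y in Metric.ball 0 r, f y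
  map_add' f g := integral_add (integrableOn_ball f.continuous r) (integrableOn_ball g.continuous r)
  map_smul' c _ := integral_const_mul c _

lemma ballIntegral_apply (r : ℝ) (f : C(EuclideanSpace ℝ ι, ℝ)) :
    ballIntegral r f = ∫ y in Metric.ball 0 r, f y := rfl

variable [DecidableEq ι] {F H : EuclideanSpace ℝ ι → EuclideanSpace ℝ ι} {r : ℝ}

lemma mapCoeff_ballIntegral_detPencil_jac (hH : ContDiff ℝ 1 H) (hF : ContDiff ℝ 1 F)
    (hHc : HasCompactSupport H) (hFc : HasCompactSupport F)
    (hHr : ∀ y, r ≤ ‖y‖ → H y = 0) (hFr : ∀ y, r ≤ ‖y‖ → F y = 0) :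
    mapCoeff (ballIntegral r) (detPencil fun i => contMatrix
        ((![1, ⟨jac H, continuous_jac hH⟩, ⟨jac F, continuous_jac hF⟩] :
          Fin 3 → C(EuclideanSpace ℝ ι, Matrix ι ι ℝ)) i)) =
      MvPolynomial.C (volume.real (Metric.ball (0 : EuclideanSpace ℝ ι) r)) *
        MvPolynomial.X 0 ^ Fintype.card ι := by
  obtain ⟨K, hK⟩ := hH.lipschitzWith_of_hasCompactSupport hHc one_ne_zero
  obtain ⟨L, hL⟩ := hF.lipschitzWith_of_hasCompactSupport hFc one_ne_zero
  refine MvPolynomial.funext_set ![Ioi ((K + L : NNReal) : ℝ), Icc (-1) 1, Icc (-1) 1] (fun i => ?_)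
    fun v hv => ?_
  · fin_cases i
    exacts [Ioi_infinite _, Icc_infinite (by norm_num), Icc_infinite (by norm_num)]
  have hv0 : ((K + L : NNReal) : ℝ) < v 0 := hv 0 trivial
  have hv1 : ‖v 1‖₊ ≤ 1 := abs_le.2 (hv 1 trivial)
  have hv2 : ‖v 2‖₊ ≤ 1 := abs_le.2 (hv 2 trivial)
  have hlip : LipschitzWith (K + L) fun y => v 1 • H y + v 2 • F y :=
    (((lipschitzWith_smul (v 1)).comp hK).add ((lipschitzWith_smul (v 2)).comp hL)).weaken
      (add_le_add (mul_le_of_le_one_left' hv1) (mul_le_of_le_one_left' hv2))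
  have hdet : ∀ y, (∑ i, v i • (![1, ⟨jac H, continuous_jac hH⟩, ⟨jac F, continuous_jac hF⟩] :
      Fin 3 → C(EuclideanSpace ℝ ι, Matrix ι ι ℝ)) i y).det =
      (v 0 • ContinuousLinearMap.id ℝ _ + fderiv ℝ (fun y => v 1 • H y + v 2 • F y) y).det := by
    intro y
    rw [← det_smul_one_add_jac, jac_smul_add_smul (hH.differentiable one_ne_zero y)
      (hF.differentiable one_ne_zero y), Fin.sum_univ_three, add_assoc]
    rfl
  rw [eval_mapCoeff, ballIntegral_apply]
  simp_rw [eval_detPencil_contMatrix, hdet]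
  rw [integral_det_smul_id_add_fderiv volume _ hlip hv0]
  · simp [mul_comm]
  · exact fun y hy => by simp [hHr y hy, hFr y hy]
  · exact ((hH.const_smul _).add (hF.const_smul _)).differentiable one_ne_zero

lemma integral_trace_adjugate_jac_eq_zero_of_hasCompactSupport (hH : ContDiff ℝ 1 H)
    (hF : ContDiff ℝ 1 F) (hHc : HasCompactSupport H) (hFc : HasCompactSupport F) :
    ∫ y, ((jac H y).adjugate * jac F y).trace = 0 := by
  obtain ⟨r₁, -, hr₁⟩ := hHc.exists_pos_le_norm
  obtain ⟨r₂, -, hr₂⟩ := hFc.exists_pos_le_norm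
  obtain ⟨r₃, -, hr₃⟩ := (hFc.fderiv ℝ).exists_pos_le_norm
  set r := r₁ ⊔ (r₂ ⊔ r₃)
  have hFr : ∀ y, r ≤ ‖y‖ → F y = 0 := fun y hy =>
    hr₂ y ((le_sup_left.trans le_sup_right).trans hy)
  have hpoly := mapCoeff_ballIntegral_detPencil_jac hH hF hHc hFc
    (fun y hy => hr₁ y (le_sup_left.trans hy)) hFr
  have hout : ∀ y ∉ Metric.ball 0 r, ((jac H y).adjugate * jac F y).trace = 0 := fun y hy => by
    have hy' : r₃ ≤ ‖y‖ :=
      (le_sup_right.trans le_sup_right).trans (not_lt.1 (mem_ball_zero_iff.not.1 hy))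
    simp [jac, hr₃ y hy']
  calc ∫ y, ((jac H y).adjugate * jac F y).trace
      = ∫ y in Metric.ball 0 r, ((jac H y).adjugate * jac F y).trace :=
        (setIntegral_eq_integral_of_forall_compl_eq_zero hout).symm
    _ = MvPolynomial.eval ![0, 1, 0] (MvPolynomial.pderiv 2 (mapCoeff (ballIntegral r) (detPencil
          fun i => contMatrix ((![1, ⟨jac H, continuous_jac hH⟩, ⟨jac F, continuous_jac hF⟩] :
            Fin 3 → C(EuclideanSpace ℝ ι, Matrix ι ι ℝ)) i)))) := by
        rw [← mapCoeff_pderiv, eval_mapCoeff, ballIntegral_apply]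
        simp_rw [eval_pderiv_detPencil_contMatrix]
        simp [Fin.sum_univ_three]
    _ = 0 := by
        rw [hpoly]
        simp [MvPolynomial.pderiv_X]

-- The cofactor matrix of a Jacobian is divergence-free; in this weak form `H` need not be `C²`.
lemma integral_trace_adjugate_jac_eq_zero (hH : ContDiff ℝ 1 H) (hF : ContDiff ℝ 1 F)
    (hFc : HasCompactSupport F) : ∫ y, ((jac H y).adjugate * jac F y).trace = 0 := by
  obtain ⟨χ, hχ, hχc, -, hχ1⟩ :=
    exists_contDiff_eventuallyEq_one hFc.isCompact isOpen_univ (subset_univ _) 1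
  rw [← integral_trace_adjugate_jac_eq_zero_of_hasCompactSupport (hχ.smul hH) hF
    hχc.smul_right hFc]
  refine integral_congr_ae (.of_forall fun y => ?_)
  by_cases hy : y ∈ tsupport F
  · have hloc : (fun y => χ y • H y) =ᶠ[𝓝 y] H := (hχ1 y hy).mono fun z hz => by simp [hz]
    exact congrArg (fun M => (M.adjugate * jac F y).trace) (jac_congr hloc).symm
  · simp [jac, Function.notMem_support.1 fun h => hy (support_fderiv_subset ℝ h)]

end NullLagrangian
/-! ### The divergence theorem on a ball -/

section Cutoff

variable {E : Type*} [NormedAddCommGroup E] {R m : ℝ} {y : E}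

/-- A smooth cutoff of the ball of radius `R`, converging to its indicator as `m → ∞`. -/
def cutoff (R m : ℝ) (y : E) : ℝ :=
  smoothTransition (m * (R ^ 2 - ‖y‖ ^ 2))

/-- The factor by which the gradient of `cutoff` is an inward radial field. -/
def cutoffWeight (R m : ℝ) (y : E) : ℝ :=
  2 * m * deriv smoothTransition (m * (R ^ 2 - ‖y‖ ^ 2))

lemma cutoff_nonneg : 0 ≤ cutoff R m y :=
  smoothTransition.nonneg _

lemma cutoff_le_one : cutoff R m y ≤ 1 :=
  smoothTransition.le_one _

lemma mul_sub_norm_sq_nonpos (hm : 0 ≤ m) (hR : 0 ≤ R) (hy : R ≤ ‖y‖) :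
    m * (R ^ 2 - ‖y‖ ^ 2) ≤ 0 :=
  mul_nonpos_of_nonneg_of_nonpos hm (sub_nonpos.2 (pow_le_pow_left₀ hR hy 2))

lemma cutoff_eq_zero (hm : 0 ≤ m) (hR : 0 ≤ R) (hy : R ≤ ‖y‖) : cutoff R m y = 0 :=
  smoothTransition.zero_of_nonpos (mul_sub_norm_sq_nonpos hm hR hy)

lemma cutoff_eq_one (hy : 1 ≤ m * (R ^ 2 - ‖y‖ ^ 2)) : cutoff R m y = 1 :=
  smoothTransition.one_of_one_le hy

lemma cutoffWeight_nonneg (hm : 0 ≤ m) : 0 ≤ cutoffWeight R m y :=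
  mul_nonneg (by positivity) smoothTransition.monotone.deriv_nonneg

lemma cutoffWeight_eq_zero (hm : 0 ≤ m) (hR : 0 ≤ R) (hy : R ≤ ‖y‖) : cutoffWeight R m y = 0 := by
  have hmin : deriv smoothTransition (m * (R ^ 2 - ‖y‖ ^ 2)) = 0 :=
    IsLocalMin.deriv_eq_zero (.of_forall fun x =>
      (smoothTransition.zero_of_nonpos (mul_sub_norm_sq_nonpos hm hR hy)).trans_le
        (smoothTransition.nonneg x))
  rw [cutoffWeight, hmin, mul_zero]

lemma cutoffWeight_eq_zero_of_one_le (hy : 1 ≤ m * (R ^ 2 - ‖y‖ ^ 2)) : cutoffWeight R m y = 0 := by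
  have hmax : deriv smoothTransition (m * (R ^ 2 - ‖y‖ ^ 2)) = 0 :=
    IsLocalMax.deriv_eq_zero (.of_forall fun x =>
      (smoothTransition.le_one x).trans_eq (smoothTransition.one_of_one_le hy).symm)
  rw [cutoffWeight, hmax, mul_zero]

lemma continuous_cutoffWeight : Continuous (cutoffWeight R m : E → ℝ) := by
  have := (smoothTransition.contDiff (n := 1)).continuous_deriv le_rfl
  unfold cutoffWeight
  fun_prop

variable [InnerProductSpace ℝ E]

lemma contDiff_cutoff : ContDiff ℝ 1 (cutoff R m : E → ℝ) :=
  smoothTransition.contDiff.comp (contDiff_const.mul (contDiff_const.sub (contDiff_norm_sq ℝ)))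

lemma hasGradientAt_cutoff [CompleteSpace E] :
    HasGradientAt (cutoff R m) (-cutoffWeight R m y • y) y := by
  have hinner : HasFDerivAt (fun y : E => m * (R ^ 2 - ‖y‖ ^ 2))
      (m • -((2 : ℕ) • innerSL ℝ y : E →L[ℝ] ℝ)) y :=
    ((hasStrictFDerivAt_norm_sq y).hasFDerivAt.const_sub (R ^ 2)).const_mul m
  have houter : HasDerivAt smoothTransition
      (deriv smoothTransition (m * (R ^ 2 - ‖y‖ ^ 2))) (m * (R ^ 2 - ‖y‖ ^ 2)) :=
    ((smoothTransition.contDiff (n := 1)).differentiable one_ne_zero _).hasDerivAt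
  rw [hasGradientAt_iff_hasFDerivAt]
  refine (houter.comp_hasFDerivAt y hinner).congr_fderiv ?_
  ext v
  simp [cutoffWeight]
  ring

end Cutoff

section DivergenceTheorem

variable {ι : Type*} [Fintype ι] {F H : EuclideanSpace ℝ ι → EuclideanSpace ℝ ι} {R m : ℝ}

lemma trace_adjugate_mul_jac_cutoff_smul [DecidableEq ι] (hF : ContDiff ℝ 1 F) (A : Matrix ι ι ℝ)
    (y : EuclideanSpace ℝ ι) :
    (A.adjugate * jac (fun y => cutoff R m y • F y) y).trace =
      cutoff R m y * (A.adjugate * jac F y).trace -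
        cutoffWeight R m y * (y.ofLp ⬝ᵥ A.adjugate.mulVec (F y)) := by
  rw [jac_smul (contDiff_cutoff.differentiable one_ne_zero y) (hF.differentiable one_ne_zero y),
    hasGradientAt_cutoff.gradient, Matrix.mul_add, Matrix.trace_add, Matrix.mul_smul,
    Matrix.trace_smul, smul_eq_mul, Matrix.mul_vecMulVec, Matrix.trace_vecMulVec, WithLp.ofLp_smul,
    dotProduct_smul, dotProduct_comm, smul_eq_mul]
  ring

lemma integral_cutoff_mul_trace [DecidableEq ι] (hR : 0 < R) (hm : 0 ≤ m)
    (hH : ContDiff ℝ 1 H) (hF : ContDiff ℝ 1 F) :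
    ∫ y in Metric.ball 0 R, cutoff R m y * ((jac H y).adjugate * jac F y).trace =
      ∫ y in Metric.ball 0 R, cutoffWeight R m y * (y.ofLp ⬝ᵥ (jac H y).adjugate.mulVec (F y)) := by
  have hsupp : HasCompactSupport fun y => cutoff R m y • F y :=
    HasCompactSupport.intro (isCompact_closedBall 0 R) fun y hy => by
      rw [cutoff_eq_zero hm hR.le (not_le.1 (mem_closedBall_zero_iff.not.1 hy)).le, zero_smul]
  have hint := integral_trace_adjugate_jac_eq_zero hH (contDiff_cutoff.smul hF) hsupp
  change ∫ y, ((jac H y).adjugate * jac (fun y => cutoff R m y • F y) y).trace = 0 at hint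
  simp_rw [trace_adjugate_mul_jac_cutoff_smul hF] at hint
  rw [← setIntegral_eq_integral_of_forall_compl_eq_zero (s := Metric.ball 0 R), integral_sub,
    sub_eq_zero] at hint
  · exact hint
  · exact integrableOn_ball (contDiff_cutoff.continuous.mul (continuous_trace_adjugate_jac hH hF)) R
  · exact integrableOn_ball
      (continuous_cutoffWeight.mul (continuous_dotProduct_adjugate_jac hH hF)) R
  · intro y hy
    have hy' : R ≤ ‖y‖ := not_lt.1 (mem_ball_zero_iff.not.1 hy)
    rw [cutoff_eq_zero hm hR.le hy', cutoffWeight_eq_zero hm hR.le hy']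
    ring

lemma integral_cutoffWeight_mul_norm_sq_le (hR : 0 < R) (hm : 0 ≤ m) :
    ∫ y in Metric.ball (0 : EuclideanSpace ℝ ι) R, cutoffWeight R m y * ‖y‖ ^ 2 ≤
      Fintype.card ι * volume.real (Metric.ball (0 : EuclideanSpace ℝ ι) R) := by
  classical
  have hflux := integral_cutoff_mul_trace (ι := ι) hR hm contDiff_id contDiff_id
  simp only [jac_id, Matrix.adjugate_one, one_mul, Matrix.trace_one, Matrix.one_mulVec, id] at hflux
  calc ∫ y in Metric.ball (0 : EuclideanSpace ℝ ι) R, cutoffWeight R m y * ‖y‖ ^ 2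
      = ∫ y in Metric.ball (0 : EuclideanSpace ℝ ι) R, cutoff R m y * Fintype.card ι := by
        rw [hflux]
        simp_rw [EuclideanSpace.real_norm_sq_eq, dotProduct, sq]
    _ ≤ ∫ _ in Metric.ball (0 : EuclideanSpace ℝ ι) R, (Fintype.card ι : ℝ) :=
        setIntegral_mono_on
          (integrableOn_ball (contDiff_cutoff.continuous.mul continuous_const) R)
          (integrableOn_ball continuous_const R) measurableSet_ball fun y _ =>
            mul_le_of_le_one_left (Nat.cast_nonneg _) cutoff_le_one
    _ = Fintype.card ι * volume.real (Metric.ball (0 : EuclideanSpace ℝ ι) R) := by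
        rw [setIntegral_const, smul_eq_mul, mul_comm]

lemma tendsto_integral_cutoff_mul {f : EuclideanSpace ℝ ι → ℝ} (hf : Continuous f) :
    Tendsto (fun m => ∫ y in Metric.ball 0 R, cutoff R m y * f y) atTop
      (𝓝 (∫ y in Metric.ball 0 R, f y)) := by
  refine tendsto_integral_filter_of_dominated_convergence (fun y => ‖f y‖)
    (.of_forall fun m => (contDiff_cutoff.continuous.mul hf).aestronglyMeasurable)
    (.of_forall fun m => .of_forall fun y => ?_) (integrableOn_ball hf R).norm ?_
  · rw [norm_mul, Real.norm_of_nonneg cutoff_nonneg]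
    exact mul_le_of_le_one_left (norm_nonneg _) cutoff_le_one
  · filter_upwards [ae_restrict_mem measurableSet_ball] with y hy
    have hy' : 0 < R ^ 2 - ‖y‖ ^ 2 :=
      sub_pos.2 (pow_lt_pow_left₀ (mem_ball_zero_iff.1 hy) (norm_nonneg y) two_ne_zero)
    refine tendsto_const_nhds.congr' ?_
    filter_upwards [eventually_ge_atTop (1 / (R ^ 2 - ‖y‖ ^ 2))] with m hm
    rw [cutoff_eq_one ((div_le_iff₀ hy').1 hm), one_mul]

lemma abs_integral_cutoffWeight_mul_le {b : EuclideanSpace ℝ ι → ℝ} (hb : Continuous b) {ε : ℝ}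
    (hR : 0 < R) (hm : 0 ≤ m) (hε : 0 ≤ ε)
    (hbε : ∀ y ∈ Metric.ball 0 R, |b y| ≤ ε * ‖y‖ ^ 2 ∨ 1 ≤ m * (R ^ 2 - ‖y‖ ^ 2)) :
    |∫ y in Metric.ball 0 R, cutoffWeight R m y * b y| ≤
      ε * (Fintype.card ι * volume.real (Metric.ball (0 : EuclideanSpace ℝ ι) R)) := by
  have hpt : ∀ y ∈ Metric.ball (0 : EuclideanSpace ℝ ι) R,
      |cutoffWeight R m y * b y| ≤ ε * (cutoffWeight R m y * ‖y‖ ^ 2) := by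
    intro y hy
    have hw : 0 ≤ cutoffWeight R m y := cutoffWeight_nonneg hm
    rw [abs_mul, abs_of_nonneg hw]
    rcases hbε y hy with h | h
    · exact (mul_le_mul_of_nonneg_left h hw).trans_eq (mul_left_comm _ _ _)
    · simp [cutoffWeight_eq_zero_of_one_le h]
  calc |∫ y in Metric.ball 0 R, cutoffWeight R m y * b y|
      ≤ ∫ y in Metric.ball 0 R, |cutoffWeight R m y * b y| := abs_integral_le_integral_abs
    _ ≤ ∫ y in Metric.ball (0 : EuclideanSpace ℝ ι) R, ε * (cutoffWeight R m y * ‖y‖ ^ 2) :=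
        setIntegral_mono_on (integrableOn_ball (continuous_cutoffWeight.mul hb).abs R)
          (integrableOn_ball (continuous_const.mul
            (continuous_cutoffWeight.mul (continuous_norm.pow 2))) R) measurableSet_ball hpt
    _ ≤ ε * (Fintype.card ι * volume.real (Metric.ball (0 : EuclideanSpace ℝ ι) R)) := by
        rw [integral_const_mul]
        exact mul_le_mul_of_nonneg_left (integral_cutoffWeight_mul_norm_sq_le hR hm) hε

lemma exists_pos_forall_abs_le_or_le_sub_norm_sq {b : EuclideanSpace ℝ ι → ℝ} (hb : Continuous b)
    (hbR : ∀ y, ‖y‖ = R → b y = 0) (hR : 0 < R) {ε : ℝ} (hε : 0 < ε) :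
    ∃ c > 0, ∀ y ∈ Metric.ball 0 R, |b y| ≤ ε * ‖y‖ ^ 2 ∨ c ≤ R ^ 2 - ‖y‖ ^ 2 := by
  have hK : IsCompact (Metric.closedBall 0 R ∩ {y | ε * ‖y‖ ^ 2 ≤ |b y|}) :=
    (isCompact_closedBall 0 R).inter_right
      (isClosed_le (continuous_const.mul (continuous_norm.pow 2)) hb.abs)
  have hlt : ∀ y ∈ Metric.closedBall 0 R ∩ {y | ε * ‖y‖ ^ 2 ≤ |b y|}, 0 < R ^ 2 - ‖y‖ ^ 2 := by
    rintro y ⟨hy, hby : ε * ‖y‖ ^ 2 ≤ |b y|⟩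
    have hne : ‖y‖ ≠ R := fun h => by
      rw [hbR y h, abs_zero, h] at hby
      exact hby.not_gt (by positivity)
    exact sub_pos.2 (pow_lt_pow_left₀ ((mem_closedBall_zero_iff.1 hy).lt_of_ne hne)
      (norm_nonneg y) two_ne_zero)
  obtain ⟨c, hc, hKc⟩ := hK.exists_forall_le' (f := fun y => R ^ 2 - ‖y‖ ^ 2) (by fun_prop) hlt
  refine ⟨c, hc, fun y hy => (le_total |b y| (ε * ‖y‖ ^ 2)).imp_right fun h => ?_⟩
  exact hKc y ⟨Metric.ball_subset_closedBall hy, h⟩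

lemma tendsto_integral_cutoffWeight_mul_zero {b : EuclideanSpace ℝ ι → ℝ} (hb : Continuous b)
    (hbR : ∀ y, ‖y‖ = R → b y = 0) (hR : 0 < R) :
    Tendsto (fun m => ∫ y in Metric.ball 0 R, cutoffWeight R m y * b y) atTop (𝓝 0) := by
  set N := Fintype.card ι * volume.real (Metric.ball (0 : EuclideanSpace ℝ ι) R)
  have : 0 ≤ N := by positivity
  refine Metric.tendsto_nhds.2 fun ε hε => ?_
  obtain ⟨c, hc, hbc⟩ :=
    exists_pos_forall_abs_le_or_le_sub_norm_sq hb hbR hR (ε := ε / (N + 1)) (by positivity)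
  filter_upwards [eventually_ge_atTop 0, eventually_ge_atTop (1 / c)] with m hm hmc
  rw [dist_zero_right, Real.norm_eq_abs]
  calc |∫ y in Metric.ball 0 R, cutoffWeight R m y * b y| ≤ ε / (N + 1) * N :=
        abs_integral_cutoffWeight_mul_le hb hR hm (by positivity) fun y hy =>
          (hbc y hy).imp_right fun h =>
            ((div_le_iff₀ hc).1 hmc).trans (mul_le_mul_of_nonneg_left h hm)
    _ < ε := by
        rw [div_mul_eq_mul_div, div_lt_iff₀ (by positivity)]
        linarith [mul_add ε N 1]

theorem integral_trace_adjugate_jac_eq_zero_of_flux [DecidableEq ι] (hR : 0 < R)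
    (hH : ContDiff ℝ 1 H) (hF : ContDiff ℝ 1 F)
    (hflux : ∀ y : EuclideanSpace ℝ ι, ‖y‖ = R → y.ofLp ⬝ᵥ (jac H y).adjugate.mulVec (F y) = 0) :
    ∫ y in Metric.ball 0 R, ((jac H y).adjugate * jac F y).trace = 0 := by
  refine tendsto_nhds_unique (tendsto_integral_cutoff_mul (continuous_trace_adjugate_jac hH hF))
    ((tendsto_integral_cutoffWeight_mul_zero (continuous_dotProduct_adjugate_jac hH hF) hflux
      hR).congr' ?_)
  filter_upwards [eventually_ge_atTop 0] with m hm
  exact (integral_cutoff_mul_trace hR hm hH hF).symm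

end DivergenceTheorem

/-! ### Robin functions on a ball -/

section Hessian

lemma contDiff_gradient {E : Type*} [NormedAddCommGroup E] [InnerProductSpace ℝ E] [CompleteSpace E]
    {f : E → ℝ} (hf : ContDiff ℝ 2 f) : ContDiff ℝ 1 (gradient f) :=
  (InnerProductSpace.toDual ℝ E).symm.toContinuousLinearEquiv.contDiff.comp
    (hf.fderiv_right (by norm_num))

lemma differentiable_fderiv {E : Type*} [NormedAddCommGroup E] [NormedSpace ℝ E] {f : E → ℝ}
    (hf : ContDiff ℝ 2 f) : Differentiable ℝ (fderiv ℝ f) :=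
  (hf.fderiv_right (m := 1) (by norm_num)).differentiable one_ne_zero

lemma fderiv_fderiv_comm {E : Type*} [NormedAddCommGroup E] [NormedSpace ℝ E] {f : E → ℝ}
    (hf : ContDiff ℝ 2 f) (y v w : E) :
    fderiv ℝ (fderiv ℝ f) y v w = fderiv ℝ (fderiv ℝ f) y w v :=
  hf.contDiffAt.isSymmSndFDerivAt (by simp) v w

lemma hasFDerivAt_fderiv_apply {E : Type*} [NormedAddCommGroup E] [NormedSpace ℝ E] {f : E → ℝ}
    (hf : ContDiff ℝ 2 f) (y v : E) :
    HasFDerivAt (fun z => fderiv ℝ f z v) ((fderiv ℝ (fderiv ℝ f) y).flip v) y :=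
  ((differentiable_fderiv hf y).hasFDerivAt.clm_apply (hasFDerivAt_const v y)).congr_fderiv
    (by simp)

variable {ι : Type*} [DecidableEq ι] {f g : EuclideanSpace ℝ ι → ℝ} {y : EuclideanSpace ℝ ι}

/-- The Hessian matrix of `f` in the standard coordinates, the entry of the determinantal pencils
whose coefficients are integrated over a ball. -/
def hess (f : EuclideanSpace ℝ ι → ℝ) (y : EuclideanSpace ℝ ι) : Matrix ι ι ℝ :=
  Matrix.of fun i j =>
    fderiv ℝ (fderiv ℝ f) y (EuclideanSpace.single j 1) (EuclideanSpace.single i 1)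

lemma hess_congr (h : f =ᶠ[𝓝 y] g) : hess f y = hess g y := by
  rw [hess, hess, h.fderiv.fderiv_eq]

variable [Fintype ι]

lemma isSymm_hess (hf : ContDiff ℝ 2 f) (y : EuclideanSpace ℝ ι) : (hess f y).IsSymm := by
  ext i j
  exact fderiv_fderiv_comm hf _ _ _

lemma sum_smul_single (v : EuclideanSpace ℝ ι) :
    ∑ i, v i • EuclideanSpace.single i (1 : ℝ) = v := by
  simpa using (EuclideanSpace.basisFun ι ℝ).sum_repr v

lemma dotProduct_hess_mulVec (v w : EuclideanSpace ℝ ι) :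
    w.ofLp ⬝ᵥ (hess f y).mulVec v = fderiv ℝ (fderiv ℝ f) y v w := by
  conv_rhs => rw [← sum_smul_single v, ← sum_smul_single w]
  simp only [map_sum, map_smul, sum_apply, smul_apply, smul_eq_mul, dotProduct, Matrix.mulVec, hess,
    Matrix.of_apply, Finset.mul_sum]
  exact Finset.sum_congr rfl fun i _ => Finset.sum_congr rfl fun j _ => by ring

lemma jac_gradient (hf : ContDiff ℝ 2 f) (y : EuclideanSpace ℝ ι) :
    jac (gradient f) y = hess f y := by
  ext i j
  have h : (fun z => gradient f z i) = fun z => fderiv ℝ f z (EuclideanSpace.single i 1) := by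
    ext z
    simp [← inner_gradient_left, EuclideanSpace.inner_single_right]
  have hd := (EuclideanSpace.proj (𝕜 := ℝ) i).hasFDerivAt.comp y
    ((contDiff_gradient hf).differentiable one_ne_zero y).hasFDerivAt
  have := hd.unique (h ▸ hasFDerivAt_fderiv_apply hf y (EuclideanSpace.single i 1))
  simpa [jac_apply, hess] using DFunLike.congr_fun this (EuclideanSpace.single j (1 : ℝ))

lemma continuous_hess (hf : ContDiff ℝ 2 f) : Continuous (hess f) := by
  rw [← funext (jac_gradient hf)]
  exact continuous_jac (contDiff_gradient hf)

lemma hess_sum {σ : Type*} [Fintype σ] {f : σ → EuclideanSpace ℝ ι → ℝ}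
    (hf : ∀ i, ContDiff ℝ 2 (f i)) (v : σ → ℝ) (y : EuclideanSpace ℝ ι) :
    hess (fun z => ∑ i, v i * f i z) y = ∑ i, v i • hess (f i) y := by
  have h₁ : fderiv ℝ (fun z => ∑ i, v i * f i z) = fun z => ∑ i, v i • fderiv ℝ (f i) z := by
    ext1 z
    exact (HasFDerivAt.fun_sum fun i _ =>
      ((hf i).differentiable two_ne_zero z).hasFDerivAt.const_mul (v i)).fderiv
  have h₂ : fderiv ℝ (fun z => ∑ i, v i • fderiv ℝ (f i) z) y =
      ∑ i, v i • fderiv ℝ (fderiv ℝ (f i)) y :=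
    (HasFDerivAt.fun_sum fun i _ =>
      (differentiable_fderiv (hf i) y).hasFDerivAt.const_smul (v i)).fderiv
  ext p q
  simp [hess, h₁, h₂, Matrix.sum_apply, sum_apply]

lemma hess_sub_clm (hf : ContDiff ℝ 2 f) (L : EuclideanSpace ℝ ι →L[ℝ] ℝ) :
    hess (fun z => f z - L z) y = hess f y := by
  have h : fderiv ℝ (fun z => f z - L z) = fun z => fderiv ℝ f z - L := funext fun z =>
    ((hf.differentiable two_ne_zero z).hasFDerivAt.sub L.hasFDerivAt).fderiv
  rw [hess, hess, h, fderiv_sub_const]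

end Hessian

section Robin

lemma norm_cos_smul_add_sin_smul {E : Type*} [NormedAddCommGroup E]
    [InnerProductSpace ℝ E] {y w : E} (hyw : ⟪y, w⟫ = 0) (h : ‖w‖ = ‖y‖) (t : ℝ) :
    ‖cos t • y + sin t • w‖ = ‖y‖ := by
  refine (pow_left_inj₀ (norm_nonneg _) (norm_nonneg _) two_ne_zero).1 ?_
  rw [norm_add_sq_real, inner_smul_left, inner_smul_right, hyw, norm_smul, norm_smul, h, mul_pow,
    mul_pow, Real.norm_eq_abs, Real.norm_eq_abs, sq_abs, sq_abs]
  linear_combination ‖y‖ ^ 2 * sin_sq_add_cos_sq t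

/-- The Robin condition `∂_r f = f / R` on the sphere of radius `R`, multiplied by `R`. -/
def IsRobin {E : Type*} [NormedAddCommGroup E] [NormedSpace ℝ E] (R : ℝ) (f : E → ℝ) : Prop :=
  ∀ y, ‖y‖ = R → fderiv ℝ f y y = f y

namespace IsRobin

section NormedSpace

variable {E : Type*} [NormedAddCommGroup E] [NormedSpace ℝ E] {R : ℝ} {f g : E → ℝ}

lemma congr (hf : IsRobin R f) (h : ∀ y, ‖y‖ = R → f =ᶠ[𝓝 y] g) : IsRobin R g := fun y hy => by
  rw [← (h y hy).fderiv_eq, ← (h y hy).eq_of_nhds, hf y hy]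

lemma sub_clm (hf : IsRobin R f) (hd : Differentiable ℝ f) (L : E →L[ℝ] ℝ) :
    IsRobin R fun y => f y - L y := fun y hy => by
  rw [((hd y).hasFDerivAt.fun_sub L.hasFDerivAt).fderiv, sub_apply, hf y hy]

lemma sum {σ : Type*} [Fintype σ] {f : σ → E → ℝ} (hf : ∀ i, IsRobin R (f i))
    (hd : ∀ i, Differentiable ℝ (f i)) (v : σ → ℝ) : IsRobin R fun z => ∑ i, v i * f i z := by
  intro y hy
  rw [(HasFDerivAt.fun_sum fun i _ => (hd i y).hasFDerivAt.const_mul (v i)).fderiv]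
  simp [sum_apply, hf _ y hy]

end NormedSpace

section InnerProductSpace

variable {E : Type*} [NormedAddCommGroup E] [InnerProductSpace ℝ E] {R : ℝ} {f : E → ℝ} {y w : E}

lemma fderiv_fderiv_eq_zero_of_norm_eq (hb : IsRobin R f) (hf : ContDiff ℝ 2 f) (hy : ‖y‖ = R)
    (hyw : ⟪y, w⟫ = 0) (hw : ‖w‖ = ‖y‖) : fderiv ℝ (fderiv ℝ f) y w y = 0 := by
  set c : ℝ → E := fun t => cos t • y + sin t • w
  have hc : HasDerivAt c w 0 :=
    (((hasDerivAt_cos 0).smul_const y).add ((hasDerivAt_sin 0).smul_const w)).congr_deriv (by simp)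
  have hψ : HasFDerivAt (fun z => fderiv ℝ f z z - f z) ((fderiv ℝ (fderiv ℝ f) y).flip y) y := by
    refine (((differentiable_fderiv hf y).hasFDerivAt.clm_apply (hasFDerivAt_id y)).sub
      (hf.differentiable two_ne_zero y).hasFDerivAt).congr_fderiv ?_
    ext v
    simp
  have hψc : ((fun z => fderiv ℝ f z z - f z) ∘ c) = fun _ => 0 := funext fun t =>
    sub_eq_zero.2 (hb _ ((norm_cos_smul_add_sin_smul hyw hw t).trans hy))
  have h := hψ.comp_hasDerivAt_of_eq 0 hc (by simp [c])
  rw [hψc] at h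
  exact h.unique (hasDerivAt_const _ _)

lemma fderiv_fderiv_eq_zero (hb : IsRobin R f) (hR : 0 < R) (hf : ContDiff ℝ 2 f) (hy : ‖y‖ = R)
    (hyw : ⟪y, w⟫ = 0) : fderiv ℝ (fderiv ℝ f) y w y = 0 := by
  rcases eq_or_ne w 0 with rfl | hw
  · simp
  have hw' : 0 < ‖w‖ := norm_pos_iff.2 hw
  have h := hb.fderiv_fderiv_eq_zero_of_norm_eq hf hy (w := (R / ‖w‖) • w)
    (by rw [inner_smul_right, hyw, mul_zero])
    (by rw [norm_smul, Real.norm_of_nonneg (by positivity), div_mul_cancel₀ _ hw'.ne', hy])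
  rw [map_smul, smul_apply, smul_eq_mul] at h
  exact (mul_eq_zero.1 h).resolve_left (by positivity)

end InnerProductSpace

section Euclidean

variable {ι : Type*} [Fintype ι] [DecidableEq ι] {R : ℝ} {f g h : EuclideanSpace ℝ ι → ℝ}
  {y : EuclideanSpace ℝ ι}

lemma hess_mulVec (hb : IsRobin R f) (hR : 0 < R) (hf : ContDiff ℝ 2 f) (hy : ‖y‖ = R) :
    ∃ μ : ℝ, (hess f y).mulVec y = μ • y.ofLp := by
  set z : EuclideanSpace ℝ ι := WithLp.toLp 2 ((hess f y).mulVec y) with hz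
  have hmem : z ∈ (ℝ ∙ y)ᗮᗮ := by
    refine (Submodule.mem_orthogonal _ _).2 fun w hw => ?_
    have hyw : ⟪y, w⟫ = 0 := Submodule.mem_orthogonal_singleton_iff_inner_right.1 hw
    have h := hb.fderiv_fderiv_eq_zero hR hf hy hyw
    rw [fderiv_fderiv_comm hf, ← dotProduct_hess_mulVec] at h
    rw [← h, hz, EuclideanSpace.inner_eq_star_dotProduct]
    simp [dotProduct_comm]
  rw [Submodule.orthogonal_orthogonal, Submodule.mem_span_singleton] at hmem
  obtain ⟨μ, hμ⟩ := hmem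
  exact ⟨μ, (congrArg WithLp.ofLp hμ).symm⟩

end Euclidean

end IsRobin

end Robin

section Green

variable {ι : Type*} [Fintype ι]

lemma dotProduct_adjugate_mulVec_eq_zero [DecidableEq ι] {A : Matrix ι ι ℝ} (hA : A.IsSymm)
    {y w : ι → ℝ} {μ : ℝ} (hy : A.mulVec y = μ • y) (hw : y ⬝ᵥ w = 0) :
    y ⬝ᵥ A.adjugate.mulVec w = 0 := by
  have key (ε : ℝ) (hε : ε ≠ -μ) : y ⬝ᵥ (A + ε • 1).adjugate.mulVec w = 0 := by
    have h₁ : Matrix.vecMul y (A + ε • 1) = (μ + ε) • y := by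
      rw [Matrix.vecMul_add, Matrix.vecMul_smul, Matrix.vecMul_one, add_smul, ← hy,
        ← Matrix.vecMul_transpose, hA.eq]
    have h₂ : (μ + ε) * (y ⬝ᵥ (A + ε • 1).adjugate.mulVec w) = 0 := by
      rw [← smul_eq_mul, ← smul_dotProduct, ← h₁, ← Matrix.dotProduct_mulVec,
        Matrix.mulVec_mulVec, Matrix.mul_adjugate, Matrix.smul_mulVec, Matrix.one_mulVec,
        dotProduct_smul, hw, smul_zero]
    exact (mul_eq_zero.1 h₂).resolve_left fun h => hε (by linarith)
  have hcont : Continuous fun ε : ℝ =>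
      y ⬝ᵥ (A + ε • (1 : Matrix ι ι ℝ)).adjugate.mulVec w := by fun_prop
  have := hcont.ext_on (dense_compl_singleton (-μ)) continuous_const (g := fun _ => 0) key
  simpa using congrFun this 0

lemma trace_adjugate_mul_vecMulVec_comm [DecidableEq ι] {A : Matrix ι ι ℝ} (hA : A.IsSymm)
    (u v : ι → ℝ) :
    (A.adjugate * Matrix.vecMulVec u v).trace = (A.adjugate * Matrix.vecMulVec v u).trace := by
  rw [← Matrix.trace_transpose, Matrix.transpose_mul, Matrix.trace_mul_comm,
    Matrix.transpose_vecMulVec, Matrix.adjugate_transpose, hA.eq]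

variable {R : ℝ} {f g h : EuclideanSpace ℝ ι → ℝ} {y : EuclideanSpace ℝ ι}

lemma contDiff_smul_gradient (hf : ContDiff ℝ 2 f) (hg : ContDiff ℝ 2 g) :
    ContDiff ℝ 1 (f • gradient g) :=
  (hf.of_le (by norm_num)).smul (contDiff_gradient hg)

lemma jac_smul_gradient_sub [DecidableEq ι] (hf : ContDiff ℝ 2 f) (hg : ContDiff ℝ 2 g) :
    jac (f • gradient g - g • gradient f) y =
      f y • hess g y + Matrix.vecMulVec ⇑(gradient g y) ⇑(gradient f y) -
        (g y • hess f y + Matrix.vecMulVec ⇑(gradient f y) ⇑(gradient g y)) := by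
  rw [jac_sub ((contDiff_smul_gradient hf hg).differentiable one_ne_zero y)
    ((contDiff_smul_gradient hg hf).differentiable one_ne_zero y)]
  have h (f g : EuclideanSpace ℝ ι → ℝ) (hf : ContDiff ℝ 2 f) (hg : ContDiff ℝ 2 g) :
      jac (f • gradient g) y =
        f y • hess g y + Matrix.vecMulVec ⇑(gradient g y) ⇑(gradient f y) := by
    rw [← jac_gradient hg]
    exact jac_smul (hf.differentiable two_ne_zero y)
      ((contDiff_gradient hg).differentiable one_ne_zero y)
  rw [h f g hf hg, h g f hg hf]

namespace IsRobin

lemma dotProduct_smul_gradient_sub_eq_zero (bf : IsRobin R f) (bg : IsRobin R g) (hy : ‖y‖ = R) :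
    y.ofLp ⬝ᵥ ((f • gradient g - g • gradient f) y).ofLp = 0 := by
  have h : ⟪f y • gradient g y - g y • gradient f y, y⟫ = 0 := by
    rw [inner_sub_left, real_inner_smul_left, real_inner_smul_left, inner_gradient_left,
      inner_gradient_left, bf y hy, bg y hy]
    ring
  rw [← h, EuclideanSpace.inner_eq_star_dotProduct]
  simp

-- There is no boundary term: on the sphere `y` is an eigenvector of `hess h y`, and
-- `f ∇g - g ∇f` is orthogonal to `y`.
theorem integral_green [DecidableEq ι] (bf : IsRobin R f) (bg : IsRobin R g) (bh : IsRobin R h)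
    (hR : 0 < R) (hf : ContDiff ℝ 2 f) (hg : ContDiff ℝ 2 g) (hh : ContDiff ℝ 2 h) :
    ∫ y in Metric.ball 0 R, (f y * ((hess h y).adjugate * hess g y).trace -
      g y * ((hess h y).adjugate * hess f y).trace) = 0 := by
  rw [← integral_trace_adjugate_jac_eq_zero_of_flux hR (contDiff_gradient hh)
    ((contDiff_smul_gradient hf hg).sub (contDiff_smul_gradient hg hf)) fun y hy => ?_]
  · congr with y
    rw [jac_gradient hh]
    change _ = (_ * jac (f • gradient g - g • gradient f) y).trace
    simp only [jac_smul_gradient_sub hf hg, Matrix.mul_sub, Matrix.mul_add, Matrix.mul_smul,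
      Matrix.trace_sub, Matrix.trace_add, Matrix.trace_smul, smul_eq_mul,
      trace_adjugate_mul_vecMulVec_comm (isSymm_hess hh y) (gradient g y).ofLp]
    ring
  · rw [jac_gradient hh]
    obtain ⟨μ, hμ⟩ := bh.hess_mulVec hR hh hy
    exact dotProduct_adjugate_mulVec_eq_zero (isSymm_hess hh y) hμ
      (bf.dotProduct_smul_gradient_sub_eq_zero bg hy)

end IsRobin

end Green

section MixedDiscriminant

variable {ι σ : Type*} [Fintype ι] [DecidableEq ι] {R : ℝ}

section

variable [Fintype σ] {f : σ → EuclideanSpace ℝ ι → ℝ}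

/-- The Hessians of a family of functions as matrices of continuous functions. -/
def contHess (hf : ∀ i, ContDiff ℝ 2 (f i)) (i : σ) : Matrix ι ι C(EuclideanSpace ℝ ι, ℝ) :=
  contMatrix ⟨hess (f i), continuous_hess (hf i)⟩

lemma coeff_detPencil_contHess (hf : ∀ i, ContDiff ℝ 2 (f i)) (m : σ →₀ ℕ)
    (y : EuclideanSpace ℝ ι) :
    (detPencil (contHess hf)).coeff m y = (detPencil fun i => hess (f i) y).coeff m :=
  coeff_detPencil_contMatrix _ y m

lemma continuous_coeff_detPencil_hess (hf : ∀ i, ContDiff ℝ 2 (f i)) (m : σ →₀ ℕ) :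
    Continuous fun y => (detPencil fun i => hess (f i) y).coeff m := by
  simp_rw [← coeff_detPencil_contHess hf]
  exact ContinuousMap.continuous _

lemma mapCoeff_ballIntegral_pderiv_sub_eq_zero (hR : 0 < R) (hf : ∀ i, ContDiff ℝ 2 (f i))
    (hb : ∀ i, IsRobin R (f i)) (i j : σ) :
    mapCoeff (ballIntegral R)
      (MvPolynomial.C ⟨f i, (hf i).continuous⟩ * MvPolynomial.pderiv j (detPencil (contHess hf)) -
        MvPolynomial.C ⟨f j, (hf j).continuous⟩ *
          MvPolynomial.pderiv i (detPencil (contHess hf))) = 0 := by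
  have heval (v : σ → ℝ) (i : σ) (y : EuclideanSpace ℝ ι) :
      MvPolynomial.eval (fun j => algebraMap ℝ C(EuclideanSpace ℝ ι, ℝ) (v j))
        (MvPolynomial.pderiv i (detPencil (contHess hf))) y =
      ((hess (fun z => ∑ i, v i * f i z) y).adjugate * hess (f i) y).trace := by
    rw [hess_sum hf]
    exact eval_pderiv_detPencil_contMatrix _ y v i
  refine MvPolynomial.funext fun v => ?_
  rw [eval_mapCoeff, map_zero, ballIntegral_apply]
  rw [← (hb i).integral_green (hb j)
    (IsRobin.sum hb (fun i => (hf i).differentiable two_ne_zero) v) hR (hf i) (hf j)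
    (ContDiff.sum fun i _ => contDiff_const.mul (hf i))]
  simp only [map_sub, map_mul, MvPolynomial.eval_C, ContinuousMap.sub_apply,
    ContinuousMap.mul_apply, heval, ContinuousMap.coe_mk]

theorem integral_coeff_detPencil_hess_sub (hR : 0 < R) (hf : ∀ i, ContDiff ℝ 2 (f i))
    (hb : ∀ i, IsRobin R (f i)) (i j : σ) (m : σ →₀ ℕ) :
    ∫ y in Metric.ball 0 R,
      ((m j + 1) * (f i y * (detPencil fun i => hess (f i) y).coeff (m + .single j 1)) -
        (m i + 1) * (f j y * (detPencil fun i => hess (f i) y).coeff (m + .single i 1))) = 0 := by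
  have h := congrArg (MvPolynomial.coeff m) (mapCoeff_ballIntegral_pderiv_sub_eq_zero hR hf hb i j)
  rw [coeff_mapCoeff, MvPolynomial.coeff_zero, ballIntegral_apply] at h
  rw [← h]
  congr with y
  have hnat (a : ℕ) : (a : C(EuclideanSpace ℝ ι, ℝ)) y = a := by simp
  simp only [MvPolynomial.coeff_sub, MvPolynomial.coeff_C_mul, MvPolynomial.coeff_pderiv,
    ContinuousMap.sub_apply, ContinuousMap.mul_apply, ContinuousMap.add_apply, hnat,
    coeff_detPencil_contHess, ContinuousMap.one_apply, ContinuousMap.coe_mk]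
  ring

end

variable {k : ℕ} {f : Fin 3 → EuclideanSpace ℝ ι → ℝ}

lemma integral_mul_coeff_detPencil_two_eq_zero (hR : 0 < R) (hf : ∀ i, ContDiff ℝ 2 (f i))
    (hb : ∀ i, IsRobin R (f i)) {a b : ℕ}
    (hker : ∀ y ∈ Metric.ball 0 R,
      (detPencil fun i => hess (f i) y).coeff (ternaryExp a (b + 1) 1) = 0) :
    ∫ y in Metric.ball 0 R, f 1 y * (detPencil fun i => hess (f i) y).coeff (ternaryExp a b 2) =
      0 := by
  have h := integral_coeff_detPencil_hess_sub hR hf hb 1 2 (ternaryExp a b 1)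
  have h₁ : ternaryExp a b 1 + .single 1 1 = ternaryExp a (b + 1) 1 := by
    ext i; fin_cases i <;> simp [ternaryExp]
  have h₂ : ternaryExp a b 1 + .single 2 1 = ternaryExp a b 2 := by
    ext i; fin_cases i <;> simp [ternaryExp]
  have hcoeff : ternaryExp a b 1 2 = 1 := by simp [ternaryExp]
  rw [setIntegral_congr_fun (g := fun y => 2 * (f 1 y *
    (detPencil fun i => hess (f i) y).coeff (ternaryExp a b 2))) measurableSet_ball,
    integral_const_mul] at h
  · exact (mul_eq_zero.1 h).resolve_left two_ne_zero
  · intro y hy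
    simp only [h₁, h₂, hcoeff, hker y hy]
    ring

theorem hess_eq_zero_of_coeff_detPencil_of_pos (hR : 0 < R) (hk : 2 ≤ k) (hkn : k ≤ Fintype.card ι)
    (hf : ∀ i, ContDiff ℝ 2 (f i)) (hb : ∀ i, IsRobin R (f i))
    (hpos : ∀ y ∈ Metric.ball 0 R, 0 < f 1 y)
    (h0 : ∀ y ∈ Metric.ball 0 R, (hess (f 0) y).PosDef)
    (h1 : ∀ y ∈ Metric.ball 0 R, (hess (f 1) y).PosDef)
    (hker : ∀ y ∈ Metric.ball 0 R, (detPencil fun i => hess (f i) y).coeff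
      (ternaryExp (Fintype.card ι - k) (k - 1) 1) = 0) :
    ∀ y ∈ Metric.ball 0 R, hess (f 2) y = 0 := by
  set c : EuclideanSpace ℝ ι → ℝ := fun y =>
    (detPencil fun i => hess (f i) y).coeff (ternaryExp (Fintype.card ι - k) (k - 2) 2) with hc
  have hconc : ∀ y ∈ Metric.ball 0 R, c y ≤ 0 ∧ (c y = 0 → hess (f 2) y = 0) := by
    intro y hy
    have hvec : (fun i => hess (f i) y) = ![hess (f 0) y, hess (f 1) y, hess (f 2) y] := by
      ext i : 1
      fin_cases i <;> rfl
    have hk0 := hker y hy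
    simp only [hc, hvec] at hk0 ⊢
    exact coeff_detPencil_two_nonpos (h0 y hy) (h1 y hy) (isSymm_hess (hf 2) y) hk hkn hk0
  have hint : ∫ y in Metric.ball 0 R, -(f 1 y * c y) = 0 := by
    rw [integral_neg, integral_mul_coeff_detPencil_two_eq_zero hR hf hb, neg_zero]
    rwa [show k - 2 + 1 = k - 1 by omega]
  have hcont : Continuous fun y => -(f 1 y * c y) :=
    ((hf 1).continuous.mul (continuous_coeff_detPencil_hess hf _)).neg
  rw [setIntegral_eq_zero_iff_of_nonneg_ae _ (integrableOn_ball hcont R)] at hint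
  · intro y hy
    have hzero := Measure.eqOn_open_of_ae_eq hint Metric.isOpen_ball hcont.continuousOn
      continuousOn_const hy
    exact (hconc y hy).2 ((mul_eq_zero.1 (neg_eq_zero.1 hzero)).resolve_left (hpos y hy).ne')
  · filter_upwards [ae_restrict_mem measurableSet_ball] with y hy
    exact neg_nonneg.2 (mul_nonpos_of_nonneg_of_nonpos (hpos y hy).le (hconc y hy).1)

end MixedDiscriminant

section Flat

variable {E : Type*} [NormedAddCommGroup E] [NormedSpace ℝ E] {f : E → ℝ} {R : ℝ} {y : E}

lemma smul_mem_ball_zero {t : ℝ} (hR : 0 < R) (hy : ‖y‖ ≤ R) (ht : t ∈ Ioo (0 : ℝ) 1) :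
    t • y ∈ Metric.ball (0 : E) R := by
  rw [mem_ball_zero_iff, norm_smul, Real.norm_of_nonneg ht.1.le]
  nlinarith [ht.1, ht.2, norm_nonneg y]

lemma hasDerivAt_comp_smul {F : Type*} [NormedAddCommGroup F] [NormedSpace ℝ F] {f : E → F}
    {f' : E →L[ℝ] F} {y : E} {t : ℝ} (hf : HasFDerivAt f f' (t • y)) :
    HasDerivAt (fun t : ℝ => f (t • y)) (f' y) t :=
  hf.comp_hasDerivAt t (((hasDerivAt_id t).smul_const y).congr_deriv (one_smul ℝ y))

lemma hasDerivAt_fderiv_comp_smul (hf : ContDiff ℝ 2 f) (y : E) (t : ℝ) :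
    HasDerivAt (fun t : ℝ => fderiv ℝ f (t • y) y) (fderiv ℝ (fderiv ℝ f) (t • y) y y) t :=
  hasDerivAt_comp_smul (hasFDerivAt_fderiv_apply hf (t • y) y)

lemma lt_of_hasDerivAt_pos {φ φ' : ℝ → ℝ} {a b : ℝ} (hab : a < b) (hφ : ∀ t, HasDerivAt φ (φ' t) t)
    (hpos : ∀ t ∈ Ioo a b, 0 < φ' t) : φ a < φ b :=
  strictMonoOn_of_deriv_pos (convex_Icc a b)
    (fun t _ => (hφ t).continuousAt.continuousWithinAt)
    (fun t ht => by rw [interior_Icc] at ht; rw [(hφ t).deriv]; exact hpos t ht)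
    (left_mem_Icc.2 hab.le) (right_mem_Icc.2 hab.le) hab

lemma eqOn_closedBall_affine_of_fderiv_fderiv_eq_zero (hR : 0 < R) (hf : ContDiff ℝ 2 f)
    (h : ∀ y ∈ Metric.ball 0 R, fderiv ℝ (fderiv ℝ f) y = 0) :
    EqOn (fderiv ℝ f) (fun _ => fderiv ℝ f 0) (Metric.closedBall 0 R) ∧
      EqOn f (fun y => fderiv ℝ f 0 y + f 0) (Metric.closedBall 0 R) := by
  have h0 : (0 : E) ∈ Metric.ball 0 R := Metric.mem_ball_self hR
  have hd : Differentiable ℝ f := hf.differentiable two_ne_zero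
  have h₁ : EqOn (fderiv ℝ f) (fun _ => fderiv ℝ f 0) (Metric.ball 0 R) := fun y hy =>
    Metric.isOpen_ball.is_const_of_fderiv_eq_zero (𝕜 := ℝ) Metric.isPreconnected_ball
      (differentiable_fderiv hf).differentiableOn h hy h0
  have h₂ : EqOn f (fun y => fderiv ℝ f 0 y + f 0) (Metric.ball 0 R) := by
    refine Metric.isOpen_ball.eqOn_of_fderiv_eq (𝕜 := ℝ) Metric.isPreconnected_ball
      hd.differentiableOn (by fun_prop) (fun y hy => ?_) h0 (by simp)
    rw [fderiv_add_const, ContinuousLinearMap.fderiv, h₁ hy]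
  rw [← closure_ball _ hR.ne']
  exact ⟨h₁.closure (differentiable_fderiv hf).continuous continuous_const,
    h₂.closure hd.continuous (by fun_prop)⟩

namespace IsRobin

variable [Nontrivial E]

lemma eqOn_fderiv_zero_of_fderiv_fderiv_eq_zero (hb : IsRobin R f) (hR : 0 < R)
    (hf : ContDiff ℝ 2 f) (h : ∀ y ∈ Metric.ball 0 R, fderiv ℝ (fderiv ℝ f) y = 0) :
    EqOn f (fderiv ℝ f 0) (Metric.closedBall 0 R) := by
  obtain ⟨h₁, h₂⟩ := eqOn_closedBall_affine_of_fderiv_fderiv_eq_zero hR hf h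
  obtain ⟨y₀, hy₀⟩ := exists_norm_eq E hR.le
  have hmem : y₀ ∈ Metric.closedBall 0 R := mem_closedBall_zero_iff.2 hy₀.le
  have h₀ := hb y₀ hy₀
  rw [h₁ hmem, h₂ hmem] at h₀
  intro y hy
  rw [h₂ hy]
  linarith

lemma map_zero_pos (hb : IsRobin R f) (hR : 0 < R) (hf : ContDiff ℝ 2 f)
    (h : ∀ y ∈ Metric.ball 0 R, ∀ v ≠ 0, 0 < fderiv ℝ (fderiv ℝ f) y v v) : 0 < f 0 := by
  obtain ⟨y₀, hy₀⟩ := exists_norm_eq E hR.le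
  have hne : y₀ ≠ 0 := norm_pos_iff.1 (hy₀ ▸ hR)
  have hd : ∀ t, HasDerivAt (fun t : ℝ => t * fderiv ℝ f (t • y₀) y₀ - f (t • y₀))
      (t * fderiv ℝ (fderiv ℝ f) (t • y₀) y₀ y₀) t := fun t =>
    (((hasDerivAt_id t).mul (hasDerivAt_fderiv_comp_smul hf y₀ t)).sub
      (hasDerivAt_comp_smul (hf.differentiable two_ne_zero _).hasFDerivAt)).congr_deriv (by simp)
  have := lt_of_hasDerivAt_pos zero_lt_one hd fun t ht =>
    mul_pos ht.1 (h _ (smul_mem_ball_zero hR hy₀.le ht) _ hne)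
  simpa [hb y₀ hy₀] using this

end IsRobin

lemma fderiv_zero_apply_lt_sub (hR : 0 < R) (hf : ContDiff ℝ 2 f)
    (h : ∀ y ∈ Metric.ball 0 R, ∀ v ≠ 0, 0 < fderiv ℝ (fderiv ℝ f) y v v) (hy : ‖y‖ < R)
    (hy0 : y ≠ 0) : fderiv ℝ f 0 y < f y - f 0 := by
  have hslope : ∀ t ∈ Ioo (0 : ℝ) 1, fderiv ℝ f 0 y < fderiv ℝ f (t • y) y := fun t ht => by
    simpa using lt_of_hasDerivAt_pos ht.1 (hasDerivAt_fderiv_comp_smul hf y) fun r hr =>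
      h _ (smul_mem_ball_zero hR hy.le ⟨hr.1, hr.2.trans ht.2⟩) _ hy0
  have hd : ∀ t, HasDerivAt (fun t : ℝ => f (t • y) - t * fderiv ℝ f 0 y)
      (fderiv ℝ f (t • y) y - fderiv ℝ f 0 y) t := fun t =>
    ((hasDerivAt_comp_smul (hf.differentiable two_ne_zero _).hasFDerivAt).sub
      ((hasDerivAt_id t).mul_const (fderiv ℝ f 0 y))).congr_deriv (by simp)
  have := lt_of_hasDerivAt_pos zero_lt_one hd fun t ht => sub_pos.2 (hslope t ht)
  simp only [zero_smul, zero_mul, sub_zero, one_smul, one_mul] at this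
  linarith

lemma IsRobin.sub_fderiv_zero_pos [Nontrivial E] (hb : IsRobin R f) (hR : 0 < R)
    (hf : ContDiff ℝ 2 f)
    (h : ∀ y ∈ Metric.ball 0 R, ∀ v ≠ 0, 0 < fderiv ℝ (fderiv ℝ f) y v v)
    (hy : y ∈ Metric.ball 0 R) : 0 < f y - fderiv ℝ f 0 y := by
  have hf0 := hb.map_zero_pos hR hf h
  rcases eq_or_ne y 0 with rfl | hy0
  · simpa using hf0
  · linarith [fderiv_zero_apply_lt_sub hR hf h (mem_ball_zero_iff.1 hy) hy0]

end Flat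

section Rigidity

lemma coeff_detPencil_single_of_unique {ι σ R : Type*} [Unique ι] [Fintype ι] [DecidableEq ι]
    [Fintype σ] [CommRing R] (A : σ → Matrix ι ι R) (i : σ) :
    (detPencil A).coeff (.single i 1) = A i default default := by
  classical
  rw [detPencil, Matrix.det_eq_elem_of_subsingleton _ default]
  simp [Matrix.sum_apply, MvPolynomial.coeff_sum, mul_comm (MvPolynomial.X _),
    MvPolynomial.coeff_C_mul, MvPolynomial.coeff_X, Finsupp.single_left_inj]

lemma exists_contDiff_eventuallyEq {E : Type*} [NormedAddCommGroup E] [NormedSpace ℝ E]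
    [FiniteDimensional ℝ E] {m : ℕ} {K : Set E} (hK : IsCompact K) {f : E → ℝ}
    (hf : ∀ y ∈ K, ContDiffAt ℝ m f y) :
    ∃ g : E → ℝ, ContDiff ℝ m g ∧ ∀ y ∈ K, f =ᶠ[𝓝 y] g := by
  have hU : IsOpen {y | ContDiffAt ℝ m f y} :=
    isOpen_iff_eventually.2 fun y (hy : ContDiffAt ℝ m f y) => hy.eventually (by simp)
  obtain ⟨χ, hχ, -, hsupp, hχ₁⟩ := exists_contDiff_eventuallyEq_one hK hU hf m
  refine ⟨χ * f, contDiff_iff_contDiffAt.2 fun y => ?_, fun y hy => ?_⟩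
  · by_cases hy : y ∈ tsupport χ
    · exact ContDiffAt.mul hχ.contDiffAt (hsupp hy)
    · exact contDiffAt_const.congr_of_eventuallyEq (f := fun _ => 0) <|
        (notMem_tsupport_iff_eventuallyEq.1 hy).mono fun z hz => by simp [hz]
  · filter_upwards [hχ₁ y hy] with z hz
    simp [hz]

section

variable {ι : Type*} [Finite ι] [DecidableEq ι] {f : EuclideanSpace ℝ ι → ℝ}
  {y v : EuclideanSpace ℝ ι}

lemma fderiv_fderiv_pos_of_posDef (h : (hess f y).PosDef) (hv : v ≠ 0) :
    0 < fderiv ℝ (fderiv ℝ f) y v v := by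
  have := Fintype.ofFinite ι
  rw [← dotProduct_hess_mulVec]
  simpa using h.dotProduct_mulVec_pos (x := v.ofLp) (by simpa using hv)

lemma fderiv_fderiv_eq_zero_of_hess (h : hess f y = 0) : fderiv ℝ (fderiv ℝ f) y = 0 := by
  have := Fintype.ofFinite ι
  ext v w
  simp [← dotProduct_hess_mulVec, h]

end

variable {ι : Type*} [Fintype ι] [DecidableEq ι] {R : ℝ} {k : ℕ}
  {l s υ : EuclideanSpace ℝ ι → ℝ}

lemma hess_eq_zero_of_coeff_detPencil_of_two_le (hR : 0 < R) (hk : 2 ≤ k)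
    (hkn : k ≤ Fintype.card ι) (hl : ContDiff ℝ 2 l) (hs : ContDiff ℝ 2 s) (hυ : ContDiff ℝ 2 υ)
    (bl : IsRobin R l) (bs : IsRobin R s) (bυ : IsRobin R υ)
    (pl : ∀ y ∈ Metric.ball 0 R, (hess l y).PosDef)
    (ps : ∀ y ∈ Metric.ball 0 R, (hess s y).PosDef)
    (hker : ∀ y ∈ Metric.ball 0 R, (detPencil ![hess l y, hess s y, hess υ y]).coeff
      (ternaryExp (Fintype.card ι - k) (k - 1) 1) = 0) :
    ∀ y ∈ Metric.ball 0 R, hess υ y = 0 := by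
  have : Nonempty ι := Fintype.card_pos_iff.1 (by omega)
  set s' : EuclideanSpace ℝ ι → ℝ := fun y => s y - fderiv ℝ s 0 y
  have hhess (y) : hess s' y = hess s y := hess_sub_clm hs _
  have hvec (y) : (fun i => hess (![l, s', υ] i) y) = ![hess l y, hess s y, hess υ y] := by
    ext i : 1
    fin_cases i <;> simp [hhess]
  refine hess_eq_zero_of_coeff_detPencil_of_pos hR hk hkn
    (f := ![l, s', υ])
    (by intro i; fin_cases i; exacts [hl, hs.sub (fderiv ℝ s 0).contDiff, hυ])
    (by intro i; fin_cases i; exacts [bl, bs.sub_clm (hs.differentiable two_ne_zero) _, bυ])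
    (fun y hy => ?_) pl (fun y hy => ?_) fun y hy => ?_
  · exact bs.sub_fderiv_zero_pos hR hs (fun y hy v => fderiv_fderiv_pos_of_posDef (ps y hy)) hy
  · exact (hhess y).symm ▸ ps y hy
  · exact hvec y ▸ hker y hy

theorem hess_eq_zero_of_coeff_detPencil (hR : 0 < R) (hk : 1 ≤ k)
    (hkn : k ≤ Fintype.card ι) (hl : ContDiff ℝ 2 l) (hs : ContDiff ℝ 2 s) (hυ : ContDiff ℝ 2 υ)
    (bl : IsRobin R l) (bs : IsRobin R s) (bυ : IsRobin R υ)
    (pl : ∀ y ∈ Metric.ball 0 R, (hess l y).PosDef)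
    (ps : ∀ y ∈ Metric.ball 0 R, (hess s y).PosDef)
    (hker : ∀ y ∈ Metric.ball 0 R, (detPencil ![hess l y, hess s y, hess υ y]).coeff
      (ternaryExp (Fintype.card ι - k) (k - 1) 1) = 0) :
    ∀ y ∈ Metric.ball 0 R, hess υ y = 0 := by
  rcases hk.lt_or_eq with hk2 | rfl
  · exact hess_eq_zero_of_coeff_detPencil_of_two_le hR hk2 hkn hl hs hυ bl bs bυ pl ps hker
  rcases hkn.lt_or_eq with hn2 | hn1
  · -- For `k = 1` the function `s` does not enter the equation, so it can be replaced by `l`.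
    exact hess_eq_zero_of_coeff_detPencil_of_two_le hR le_rfl hn2 hl hl hυ bl bl bυ pl pl
      fun y hy => coeff_detPencil_self_eq_zero (pl y hy) (ps y hy) hn2 (hker y hy)
  · intro y hy
    obtain ⟨_⟩ := Fintype.card_eq_one_iff_nonempty_unique.1 hn1.symm
    have h := hker y hy
    have hexp : ternaryExp (Fintype.card ι - 1) (1 - 1) 1 = .single 2 1 := by
      ext i
      fin_cases i <;> simp [ternaryExp]
    rw [hexp, coeff_detPencil_single_of_unique] at h
    ext i j
    rw [Unique.eq_default i, Unique.eq_default j]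
    exact h

theorem exists_clm_eqOn_closedBall_of_coeff_detPencil (hR : 0 < R) (hk : 1 ≤ k)
    (hkn : k ≤ Fintype.card ι) (hl : ∀ y ∈ Metric.closedBall 0 R, ContDiffAt ℝ 2 l y)
    (hs : ∀ y ∈ Metric.closedBall 0 R, ContDiffAt ℝ 2 s y)
    (hυ : ∀ y ∈ Metric.closedBall 0 R, ContDiffAt ℝ 2 υ y)
    (bl : IsRobin R l) (bs : IsRobin R s) (bυ : IsRobin R υ)
    (pl : ∀ y ∈ Metric.ball 0 R, (hess l y).PosDef)
    (ps : ∀ y ∈ Metric.ball 0 R, (hess s y).PosDef)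
    (hker : ∀ y ∈ Metric.ball 0 R, (detPencil ![hess l y, hess s y, hess υ y]).coeff
      (ternaryExp (Fintype.card ι - k) (k - 1) 1) = 0) :
    ∃ L : EuclideanSpace ℝ ι →L[ℝ] ℝ, EqOn υ L (Metric.closedBall 0 R) := by
  have : Nonempty ι := Fintype.card_pos_iff.1 (by omega)
  have hK := isCompact_closedBall (0 : EuclideanSpace ℝ ι) R
  have hrobin {f g : EuclideanSpace ℝ ι → ℝ} (hfg : ∀ y ∈ Metric.closedBall 0 R, f =ᶠ[𝓝 y] g)
      (hf : IsRobin R f) : IsRobin R g :=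
    hf.congr fun y hy => hfg y (mem_closedBall_zero_iff.2 hy.le)
  have hhess {f g : EuclideanSpace ℝ ι → ℝ} (hfg : ∀ y ∈ Metric.closedBall 0 R, f =ᶠ[𝓝 y] g)
      {y} (hy : y ∈ Metric.ball 0 R) : hess f y = hess g y :=
    hess_congr (hfg y (Metric.ball_subset_closedBall hy))
  obtain ⟨l', hl', el⟩ := exists_contDiff_eventuallyEq hK hl
  obtain ⟨s', hs', es⟩ := exists_contDiff_eventuallyEq hK hs
  obtain ⟨υ', hυ', eυ⟩ := exists_contDiff_eventuallyEq hK hυ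
  have hflat := hess_eq_zero_of_coeff_detPencil hR hk hkn hl' hs' hυ' (hrobin el bl)
    (hrobin es bs) (hrobin eυ bυ) (fun y hy => hhess el hy ▸ pl y hy)
    (fun y hy => hhess es hy ▸ ps y hy)
    (fun y hy => by rw [← hhess el hy, ← hhess es hy, ← hhess eυ hy]; exact hker y hy)
  exact ⟨_, fun y hy => (eυ y hy).eq_of_nhds.trans <|
    (hrobin eυ bυ).eqOn_fderiv_zero_of_fderiv_fderiv_eq_zero hR hυ'
      (fun y hy => fderiv_fderiv_eq_zero_of_hess (hflat y hy)) hy⟩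

end Rigidity

/-! ### Linearization of the elementary symmetric functions of the eigenvalues -/

section Symbol

open Polynomial (C X)

variable {ι R : Type*} [Fintype ι] [DecidableEq ι] [CommRing R]

lemma isHomogeneous_detPencil {σ : Type*} [Fintype σ] (A : σ → Matrix ι ι R) :
    (detPencil A).IsHomogeneous (Fintype.card ι) := by
  have hentry (i j : ι) : MvPolynomial.IsHomogeneous
      ((∑ l, (MvPolynomial.X l : MvPolynomial σ R) • (A l).map MvPolynomial.C :
        Matrix ι ι (MvPolynomial σ R)) i j) 1 := by
    rw [Matrix.sum_apply]
    exact .sum _ _ _ fun l _ => by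
      simpa using (MvPolynomial.isHomogeneous_X R l).mul (MvPolynomial.isHomogeneous_C σ (A l i j))
  rw [detPencil, Matrix.det_apply]
  refine .sum _ _ _ fun τ _ => ?_
  rw [Units.smul_def]
  refine (MvPolynomial.homogeneousSubmodule σ R _).toAddSubgroup.zsmul_mem ?_ _
  simpa using MvPolynomial.IsHomogeneous.prod Finset.univ _ (fun _ => 1) fun i _ => hentry (τ i) i

lemma add_add_eq_card_of_mem_support_detPencil {A : Fin 3 → Matrix ι ι R} {d : Fin 3 →₀ ℕ}
    (hd : d ∈ (detPencil A).support) : d 0 + d 1 + d 2 = Fintype.card ι := by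
  have h := isHomogeneous_detPencil A (MvPolynomial.mem_support_iff.1 hd)
  rw [Finsupp.weight_apply, Finsupp.sum_fintype _ _ (by simp)] at h
  simpa [Fin.sum_univ_three] using h

lemma charpoly_add_smul (A B : Matrix ι ι R) (t : R) :
    (A + t • B).charpoly =
      MvPolynomial.aeval ![(X : Polynomial R), -1, -C t] (detPencil ![1, A, B]) := by
  rw [Matrix.charpoly, detPencil, AlgHom.map_det]
  congr 1
  ext1 i j
  simp only [Fin.sum_univ_three, AlgHom.mapMatrix_apply, Matrix.map_apply, Matrix.smul_apply,
    Matrix.add_apply, Matrix.one_apply, Matrix.charmatrix_apply, Matrix.diagonal_apply,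
    Matrix.cons_val_zero, Matrix.cons_val_one, Matrix.cons_val, smul_eq_mul, map_add, map_mul,
    MvPolynomial.aeval_X, MvPolynomial.aeval_C, Polynomial.algebraMap_eq]
  split_ifs <;> simp <;> ring

lemma neg_one_pow_mul_coeff_charpoly_add_smul {k : ℕ} (hk : k ≤ Fintype.card ι)
    (A B : Matrix ι ι R) (t : R) :
    (-1) ^ k * (A + t • B).charpoly.coeff (Fintype.card ι - k) =
      ∑ d ∈ (detPencil ![1, A, B]).support with d 0 = Fintype.card ι - k,
        (detPencil ![1, A, B]).coeff d * t ^ d 2 := by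
  rw [charpoly_add_smul, MvPolynomial.aeval_def, MvPolynomial.eval₂_eq', Polynomial.finsetSum_coeff,
    Finset.mul_sum, Finset.sum_filter]
  refine Finset.sum_congr rfl fun d hd => ?_
  have hmon : (algebraMap R (Polynomial R)) (MvPolynomial.coeff d (detPencil ![1, A, B])) *
      ∏ i, ![(X : Polynomial R), -1, -C t] i ^ d i =
      C (MvPolynomial.coeff d (detPencil ![1, A, B]) * ((-1) ^ d 1 * (-t) ^ d 2)) * X ^ d 0 := by
    simp only [Polynomial.algebraMap_eq, Fin.prod_univ_three, Matrix.cons_val_zero,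
      Matrix.cons_val_one, Matrix.cons_val, map_mul, map_pow, map_neg, map_one]
    ring
  simp only [hmon, Polynomial.coeff_C_mul_X_pow, eq_comm (a := Fintype.card ι - k)]
  split_ifs with h
  · have hdk : k = d 1 + d 2 := by
      have := add_add_eq_card_of_mem_support_detPencil hd
      omega
    have hsign (m : ℕ) : ((-1 : R) ^ m) * (-1) ^ m = 1 := by rw [← mul_pow]; simp
    rw [hdk, neg_pow t, pow_add]
    linear_combination (MvPolynomial.coeff d (detPencil ![1, A, B]) * t ^ d 2) *
      ((-1) ^ d 2 * (-1) ^ d 2 * hsign (d 1) + hsign (d 2))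
  · exact mul_zero _

theorem deriv_coeff_charpoly_add_smul {k : ℕ} (hk : 1 ≤ k) (hkN : k ≤ Fintype.card ι)
    (A B : Matrix ι ι ℝ) :
    deriv (fun t : ℝ => (-1) ^ k * (A + t • B).charpoly.coeff (Fintype.card ι - k)) 0 =
      (detPencil ![1, A, B]).coeff (ternaryExp (Fintype.card ι - k) (k - 1) 1) := by
  simp_rw [neg_one_pow_mul_coeff_charpoly_add_smul hkN]
  rw [(HasDerivAt.fun_sum fun (d : Fin 3 →₀ ℕ) _ => (hasDerivAt_pow (d 2) (0 : ℝ)).const_mul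
    ((detPencil ![1, A, B]).coeff d)).deriv,
    Finset.sum_eq_single (ternaryExp (Fintype.card ι - k) (k - 1) 1)]
  · simp [ternaryExp]
  · intro d hd hne
    obtain ⟨hd, hd₀⟩ := Finset.mem_filter.1 hd
    rcases lt_trichotomy (d 2) 1 with h | h | h
    · simp [Nat.lt_one_iff.1 h]
    · refine absurd ?_ hne
      have hd₁ : d 1 = k - 1 := by
        have := add_add_eq_card_of_mem_support_detPencil hd
        omega
      ext i
      fin_cases i <;> simp [ternaryExp, hd₀, hd₁, h]
    · simp [zero_pow (Nat.sub_ne_zero_of_lt h)]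
  · intro h
    have : MvPolynomial.coeff (ternaryExp (Fintype.card ι - k) (k - 1) 1)
        (detPencil ![1, A, B]) = 0 := by
      simpa [ternaryExp] using h
    simp [this]

end Symbol

section LeadingBlock

variable {n : ℕ} {R : Type*} [CommRing R] {u : Fin (n + 1) → R}

lemma det_updateCol_mulVec {ι : Type*} [Fintype ι] [DecidableEq ι] (A : Matrix ι ι R) (i : ι)
    (v : ι → R) : (A.updateCol i (A.mulVec v)).det = v i * A.det := by
  rw [← smul_eq_mul, ← Matrix.det_updateCol_sum]
  congr 2
  ext j
  simp [Matrix.mulVec, dotProduct, mul_comm]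

lemma det_updateRow_vecMul {ι : Type*} [Fintype ι] [DecidableEq ι] (A : Matrix ι ι R) (i : ι)
    (v : ι → R) : (A.updateRow i (A.vecMul v)).det = v i * A.det := by
  rw [← Matrix.det_transpose, ← Matrix.updateCol_transpose, ← Matrix.mulVec_transpose,
    det_updateCol_mulVec, Matrix.det_transpose]

lemma sq_last_mul_det {Z : Matrix (Fin (n + 1)) (Fin (n + 1)) R} {x : R}
    (hZu : Z.mulVec u = x • u) (huZ : Z.vecMul u = x • u) (hu : u ⬝ᵥ u = 1) :
    u (Fin.last n) ^ 2 * Z.det =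
      x * (Z.submatrix Fin.castSucc Fin.castSucc -
        x • Matrix.vecMulVec (Fin.init u) (Fin.init u)).det := by
  set W := Z.updateCol (Fin.last n) u with hW
  have hblocks : (W.updateRow (Fin.last n) (W.vecMul u)).submatrix finSumFinEquiv finSumFinEquiv =
      Matrix.fromBlocks (Z.submatrix Fin.castSucc Fin.castSucc)
        (Matrix.replicateCol (Fin 1) (Fin.init u))
        (Matrix.replicateRow (Fin 1) (x • Fin.init u)) 1 := by
    have hlast : W.vecMul u (Fin.last n) = 1 := by
      simpa [hW, Matrix.vecMul, dotProduct] using hu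
    have hcast (j : Fin n) : W.vecMul u j.castSucc = x * u j.castSucc := by
      simpa [hW, Matrix.vecMul, dotProduct, Fin.castSucc_ne_last] using congrFun huZ j.castSucc
    have hinl (i : Fin n) : finSumFinEquiv (m := n) (n := 1) (.inl i) = i.castSucc := rfl
    have hinr (i : Fin 1) : finSumFinEquiv (m := n) (.inr i) = Fin.last n := by
      rw [Subsingleton.elim i 0]
      rfl
    ext i j
    obtain i | i := i <;> obtain j | j := j <;>
      simp only [Matrix.submatrix_apply, hinl, hinr]
    · simp [hW, Fin.castSucc_ne_last]
    · simp [Fin.init, hW, Fin.castSucc_ne_last]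
    · simp [Fin.init, hcast]
    · simp [hlast, Subsingleton.elim i j]
  calc u (Fin.last n) ^ 2 * Z.det
      = u (Fin.last n) * (Z.updateCol (Fin.last n) (x • u)).det := by
        rw [← hZu, det_updateCol_mulVec, sq, mul_assoc]
    _ = x * (W.updateRow (Fin.last n) (W.vecMul u)).det := by
        rw [det_updateRow_vecMul, Matrix.det_updateCol_smul]
        ring
    _ = _ := by
        rw [← Matrix.det_submatrix_equiv_self finSumFinEquiv, hblocks,
          Matrix.det_fromBlocks_one₂₂]
        congr 3
        ext i j
        simp [Matrix.mul_apply, Matrix.vecMulVec_apply, mul_left_comm]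

lemma detPencil_smul {σ ι : Type*} [Fintype σ] [Fintype ι] [DecidableEq ι] (r : R)
    (A : σ → Matrix ι ι R) :
    detPencil (r • A) = MvPolynomial.C (r ^ Fintype.card ι) * detPencil A := by
  rw [detPencil, detPencil, MvPolynomial.C_pow, ← Matrix.det_smul, Finset.smul_sum]
  congr 1
  refine Finset.sum_congr rfl fun i _ => ?_
  ext1 p q
  simp [mul_left_comm]

variable [IsDomain R] [Infinite R]

lemma X_mul_detPencil_leadingBlock {A B : Matrix (Fin (n + 1)) (Fin (n + 1)) R} (hA : A.IsSymm)
    (hB : B.IsSymm) (hAu : A.mulVec u = 0) (hBu : B.mulVec u = 0) (hu : u ⬝ᵥ u = 1) :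
    MvPolynomial.X 0 * detPencil ![1 - Matrix.vecMulVec (Fin.init u) (Fin.init u),
        A.submatrix Fin.castSucc Fin.castSucc, B.submatrix Fin.castSucc Fin.castSucc] =
      MvPolynomial.C (u (Fin.last n) ^ 2) * detPencil ![1, A, B] := by
  refine MvPolynomial.funext fun v => ?_
  set Z := ∑ i, v i • (![1, A, B] i) with hZ
  have hZ' : Z = v 0 • 1 + v 1 • A + v 2 • B := by simp [hZ, Fin.sum_univ_three]
  have hZu : Z.mulVec u = v 0 • u := by
    simp [hZ', Matrix.add_mulVec, Matrix.smul_mulVec, hAu, hBu]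
  have hZt : Z.IsSymm := by
    rw [hZ']
    exact (((Matrix.isSymm_one).smul _).add (hA.smul _)).add (hB.smul _)
  have huZ : Z.vecMul u = v 0 • u := by rw [← hZt.eq, Matrix.vecMul_transpose, hZu]
  rw [map_mul, map_mul, eval_detPencil, eval_detPencil, MvPolynomial.eval_X, MvPolynomial.eval_C,
    ← hZ, sq_last_mul_det hZu huZ hu, hZ']
  congr 2
  ext i j
  simp only [Fin.sum_univ_three, Matrix.sub_apply, Matrix.add_apply, Matrix.smul_apply,
    Matrix.submatrix_apply, Matrix.one_apply, Fin.castSucc_inj, Matrix.cons_val_zero,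
    Matrix.cons_val_one, Matrix.cons_val, smul_eq_mul]
  ring

lemma coeff_detPencil_leadingBlock {A B : Matrix (Fin (n + 1)) (Fin (n + 1)) R} (hA : A.IsSymm)
    (hB : B.IsSymm) (hAu : A.mulVec u = 0) (hBu : B.mulVec u = 0) (hu : u ⬝ᵥ u = 1)
    (a b c : ℕ) :
    (detPencil ![1 - Matrix.vecMulVec (Fin.init u) (Fin.init u),
        A.submatrix Fin.castSucc Fin.castSucc,
        B.submatrix Fin.castSucc Fin.castSucc]).coeff (ternaryExp a b c) =
      u (Fin.last n) ^ 2 * (detPencil ![1, A, B]).coeff (ternaryExp (a + 1) b c) := by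
  have hexp : ternaryExp (a + 1) b c = .single 0 1 + ternaryExp a b c := by
    ext i
    fin_cases i <;> simp [ternaryExp, add_comm]
  rw [← MvPolynomial.coeff_C_mul, ← X_mul_detPencil_leadingBlock hA hB hAu hBu hu, hexp,
    MvPolynomial.coeff_X_mul]

end LeadingBlock

/-! ### Homogeneous functions on the cone over the cap -/

section Homogeneous

variable {n : ℕ} {θ : ℝ} {g G : V n → ℝ} {x : V n} {l t : ℝ}

lemma mem_coneCap_iff : x ∈ coneCap n θ ↔ x ≠ 0 ∧ cos θ * ‖x‖ ≤ x (Fin.last n) := by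
  constructor
  · rintro ⟨l, hl, u, ⟨hu, hu'⟩, rfl⟩
    refine ⟨smul_ne_zero hl.ne' (norm_ne_zero_iff.1 (by simp [hu])), ?_⟩
    rw [norm_smul, hu, mul_one, norm_of_nonneg hl.le, mul_comm]
    exact mul_le_mul_of_nonneg_left hu' hl.le
  · rintro ⟨hx, h⟩
    have hx' := norm_pos_iff.2 hx
    refine ⟨‖x‖, hx', ‖x‖⁻¹ • x, ⟨norm_smul_inv_norm hx, ?_⟩, (smul_inv_smul₀ hx'.ne' x).symm⟩
    rwa [PiLp.smul_apply, smul_eq_mul, inv_mul_eq_div, le_div_iff₀ hx']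

/-- The interior of the cone over the spherical cap. -/
def openConeCap (n : ℕ) (θ : ℝ) : Set (V n) :=
  {x | x ≠ 0 ∧ cos θ * ‖x‖ < x (Fin.last n)}

lemma isOpen_openConeCap : IsOpen (openConeCap n θ) :=
  isOpen_ne.inter (isOpen_lt (f := fun x : V n => cos θ * ‖x‖)
    (g := fun x => x (Fin.last n)) (by fun_prop) (by fun_prop))

lemma openConeCap_subset_coneCap : openConeCap n θ ⊆ coneCap n θ := fun _ hx =>
  mem_coneCap_iff.2 ⟨hx.1, hx.2.le⟩

lemma mem_sphCap_of_mem_openConeCap (hx : x ∈ openConeCap n θ) (hx' : ‖x‖ = 1) : x ∈ sphCap n θ :=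
  ⟨hx', by simpa [hx'] using hx.2.le⟩

lemma smul_mem_coneCap (hx : x ∈ coneCap n θ) (hl : 0 < l) : l • x ∈ coneCap n θ := by
  obtain ⟨r, hr, u, hu, rfl⟩ := hx
  exact ⟨l * r, mul_pos hl hr, u, hu, smul_smul _ _ _⟩

lemma smul_mem_openConeCap (hx : x ∈ openConeCap n θ) (hl : 0 < l) : l • x ∈ openConeCap n θ := by
  refine ⟨smul_ne_zero hl.ne' hx.1, ?_⟩
  rw [norm_smul, norm_of_nonneg hl.le, PiLp.smul_apply, smul_eq_mul, mul_left_comm]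
  exact mul_lt_mul_of_pos_left hx.2 hl

lemma norm_Etop : ‖Etop n‖ = 1 := by simp [Etop]

lemma Etop_last : Etop n (Fin.last n) = 1 := by simp [Etop]

lemma add_smul_Etop_mem_coneCap (hθ : 0 < cos θ) (hx : x ∈ coneCap n θ) (ht : 0 ≤ t) :
    x + t • Etop n ∈ coneCap n θ := by
  rw [mem_coneCap_iff] at hx ⊢
  have hlast : (x + t • Etop n) (Fin.last n) = x (Fin.last n) + t := by simp [Etop_last]
  have hpos : 0 < (x + t • Etop n) (Fin.last n) := by
    rw [hlast]
    exact add_pos_of_pos_of_nonneg ((mul_pos hθ (norm_pos_iff.2 hx.1)).trans_le hx.2) ht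
  refine ⟨fun h => by simp [h] at hpos, ?_⟩
  calc cos θ * ‖x + t • Etop n‖
      ≤ cos θ * (‖x‖ + t) := by
        gcongr
        simpa [norm_smul, norm_Etop, abs_of_nonneg ht] using norm_add_le x (t • Etop n)
    _ ≤ x (Fin.last n) + t := by
        rw [mul_add]
        exact add_le_add hx.2 (mul_le_of_le_one_left ht (cos_le_one θ))
    _ = (x + t • Etop n) (Fin.last n) := hlast.symm

namespace IsHomExt

lemma mono {m m' : ℕ∞} (h : IsHomExt n θ m g G) (hm : m' ≤ m) : IsHomExt n θ m' g G :=
  let ⟨⟨U, hU, hUc, hG⟩, h'⟩ := h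
  ⟨⟨U, hU, hUc, hG.of_le (by exact_mod_cast hm)⟩, h'⟩

lemma apply_smul {m : ℕ∞} (h : IsHomExt n θ m g G) (hx : x ∈ coneCap n θ) (hl : 0 < l) :
    G (l • x) = l * G x := by
  obtain ⟨r, hr, u, hu, rfl⟩ := hx
  rw [smul_smul, h.2.1 _ (mul_pos hl hr) u hu, h.2.1 _ hr u hu, mul_assoc]

lemma contDiffAt {m : ℕ∞} (h : IsHomExt n θ m g G) (hx : x ∈ coneCap n θ) :
    ContDiffAt ℝ m G x := by
  obtain ⟨⟨U, hU, hUc, hG⟩, -⟩ := h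
  exact hG.contDiffAt (hU.mem_nhds (hUc hx))

variable (h : IsHomExt n θ 2 g G)
include h

lemma differentiableAt (hx : x ∈ coneCap n θ) : DifferentiableAt ℝ G x :=
  (h.contDiffAt hx).differentiableAt two_ne_zero

lemma differentiableAt_fderiv (hx : x ∈ coneCap n θ) : DifferentiableAt ℝ (fderiv ℝ G) x :=
  ((h.contDiffAt hx).fderiv_right (m := 1) le_rfl).differentiableAt one_ne_zero

lemma fderiv_fderiv_comm (hx : x ∈ coneCap n θ) (v w : V n) :
    fderiv ℝ (fderiv ℝ G) x v w = fderiv ℝ (fderiv ℝ G) x w v :=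
  (h.contDiffAt hx).isSymmSndFDerivAt (by simp) v w

lemma fderiv_self (hx : x ∈ coneCap n θ) : fderiv ℝ G x x = G x := by
  have hd : HasFDerivAt G (fderiv ℝ G x) ((1 : ℝ) • x) := by
    simpa using (h.differentiableAt hx).hasFDerivAt
  refine (hasDerivAt_comp_smul hd).unique
    ((hasDerivAt_mul_const (G x)).congr_of_eventuallyEq ?_)
  filter_upwards [lt_mem_nhds one_pos] with l hl using h.apply_smul hx hl

lemma fderiv_smul (hx : x ∈ openConeCap n θ) (hl : 0 < l) :
    fderiv ℝ G (l • x) = fderiv ℝ G x := by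
  have hhom : (fun z => G (l • z)) =ᶠ[𝓝 x] fun z => l • G z := by
    filter_upwards [isOpen_openConeCap.mem_nhds hx] with z hz
    exact h.apply_smul (openConeCap_subset_coneCap hz) hl
  have hd := hhom.fderiv_eq (𝕜 := ℝ)
  rw [fderiv_comp_smul,
    fderiv_fun_const_smul (h.differentiableAt (openConeCap_subset_coneCap hx))] at hd
  exact smul_right_injective _ hl.ne' hd

lemma smul_fderiv_fderiv_smul (hx : x ∈ openConeCap n θ) (hl : 0 < l) :
    l • fderiv ℝ (fderiv ℝ G) (l • x) = fderiv ℝ (fderiv ℝ G) x := by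
  rw [← fderiv_comp_smul]
  refine EventuallyEq.fderiv_eq ?_
  filter_upwards [isOpen_openConeCap.mem_nhds hx] with z hz using h.fderiv_smul hz hl

lemma fderiv_fderiv_self (hx : x ∈ openConeCap n θ) : fderiv ℝ (fderiv ℝ G) x x = 0 := by
  have hd : HasFDerivAt (fderiv ℝ G) (fderiv ℝ (fderiv ℝ G) x) ((1 : ℝ) • x) := by
    simpa using (h.differentiableAt_fderiv (openConeCap_subset_coneCap hx)).hasFDerivAt
  refine (hasDerivAt_comp_smul hd).unique
    ((hasDerivAt_const (1 : ℝ) (fderiv ℝ G x)).congr_of_eventuallyEq ?_)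
  filter_upwards [lt_mem_nhds one_pos] with l hl using h.fderiv_smul hx hl

-- `x` may lie on the boundary of the cone, so only the rays `x + t E`, `t ≥ 0`, are available.
lemma fderiv_smul_Etop (hθ : 0 < cos θ) (hx : x ∈ coneCap n θ) (hl : 0 < l) :
    fderiv ℝ G (l • x) (Etop n) = fderiv ℝ G x (Etop n) := by
  have hsmul : HasDerivAt (fun t : ℝ => G (l • x + t • l • Etop n))
      (fderiv ℝ G (l • x) (l • Etop n)) 0 :=
    (h.differentiableAt (smul_mem_coneCap hx hl)).hasFDerivAt.hasLineDerivAt _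
  have hbase : HasDerivAt (fun t : ℝ => l * G (x + t • Etop n)) (l * fderiv ℝ G x (Etop n)) 0 :=
    ((h.differentiableAt hx).hasFDerivAt.hasLineDerivAt _).const_mul l
  have heq : EqOn (fun t : ℝ => G (l • x + t • l • Etop n)) (fun t => l * G (x + t • Etop n))
      (Ici 0) := fun t ht => by
    simp only [smul_comm t l, ← smul_add, h.apply_smul (add_smul_Etop_mem_coneCap hθ hx ht) hl]
  have := (uniqueDiffWithinAt_Ici (0 : ℝ)).eq_deriv _ hsmul.hasDerivWithinAt
    (hbase.hasDerivWithinAt.congr heq (heq self_mem_Ici))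
  rw [map_smul, smul_eq_mul] at this
  exact mul_left_cancel₀ hl.ne' this

end IsHomExt

end Homogeneous

/-! ### Gnomonic coordinates on the cap -/

section Gnomonic

variable {n : ℕ} {θ : ℝ} {y : EuclideanSpace ℝ (Fin n)}

/-- The inclusion of `ℝⁿ` as the horizontal hyperplane of `ℝⁿ⁺¹`. -/
def horiz (n : ℕ) : EuclideanSpace ℝ (Fin n) →L[ℝ] V n :=
  ∑ i, (EuclideanSpace.proj i : EuclideanSpace ℝ (Fin n) →L[ℝ] ℝ).smulRight
    (EuclideanSpace.single (Fin.castSucc i) (1 : ℝ) : V n)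

lemma horiz_castSucc (y : EuclideanSpace ℝ (Fin n)) (i : Fin n) :
    horiz n y (Fin.castSucc i) = y i := by
  simp [horiz, Pi.single_apply, Fin.castSucc_inj]

lemma horiz_last (y : EuclideanSpace ℝ (Fin n)) : horiz n y (Fin.last n) = 0 := by
  simp [horiz, (Fin.castSucc_ne_last _).symm]

lemma horiz_single (i : Fin n) :
    horiz n (EuclideanSpace.single i 1) = EuclideanSpace.single (Fin.castSucc i) 1 := by
  ext j
  induction j using Fin.lastCases with
  | last => simp [horiz_last, (Fin.castSucc_ne_last _).symm]
  | cast j => simp [horiz_castSucc, Fin.castSucc_inj]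

lemma inner_horiz_Etop (b : EuclideanSpace ℝ (Fin n)) : ⟪horiz n b, Etop n⟫ = 0 := by
  simp [Etop, EuclideanSpace.inner_single_right, horiz_last]

/-- The inverse of the gnomonic (central) projection, onto the hyperplane `x_{n+1} = 1` tangent to
the sphere at `E_{n+1}`. -/
def gnom (y : EuclideanSpace ℝ (Fin n)) : V n := horiz n y + Etop n

lemma gnom_castSucc (y : EuclideanSpace ℝ (Fin n)) (i : Fin n) :
    gnom y (Fin.castSucc i) = y i := by
  simp [gnom, horiz_castSucc, Etop, Fin.castSucc_ne_last]

lemma gnom_last (y : EuclideanSpace ℝ (Fin n)) : gnom y (Fin.last n) = 1 := by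
  simp [gnom, horiz_last, Etop]

lemma inner_horiz_gnom (b y : EuclideanSpace ℝ (Fin n)) : ⟪horiz n b, gnom y⟫ = ⟪b, y⟫ := by
  simp [PiLp.inner_apply, Fin.sum_univ_castSucc, horiz_castSucc, horiz_last, gnom_castSucc]

lemma gnom_ne_zero (y : EuclideanSpace ℝ (Fin n)) : gnom y ≠ 0 := fun h => by
  simpa [h] using gnom_last y

lemma norm_gnom_pos (y : EuclideanSpace ℝ (Fin n)) : 0 < ‖gnom y‖ := norm_pos_iff.2 (gnom_ne_zero y)

lemma norm_gnom (y : EuclideanSpace ℝ (Fin n)) : ‖gnom y‖ = √(1 + ‖y‖ ^ 2) := by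
  rw [EuclideanSpace.norm_eq, EuclideanSpace.norm_sq_eq]
  simp [Fin.sum_univ_castSucc, gnom_last, gnom_castSucc, add_comm]

lemma hasFDerivAt_gnom (y : EuclideanSpace ℝ (Fin n)) : HasFDerivAt gnom (horiz n) y :=
  (horiz n).hasFDerivAt.add_const _

lemma contDiff_gnom {m : WithTop ℕ∞} : ContDiff ℝ m (gnom (n := n)) :=
  (horiz n).contDiff.add contDiff_const

lemma gnom_mem_coneCap_iff (hθ : 0 < cos θ) (hR : 0 ≤ tan θ) :
    gnom y ∈ coneCap n θ ↔ ‖y‖ ≤ tan θ := by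
  rw [mem_coneCap_iff, and_iff_right (gnom_ne_zero y), gnom_last, norm_gnom, ← le_div_iff₀' hθ,
    one_div, ← inv_sqrt_one_add_tan_sq hθ, inv_inv, sqrt_le_sqrt_iff (by positivity),
    add_le_add_iff_left, sq_le_sq₀ (norm_nonneg y) hR]

lemma gnom_mem_openConeCap (hθ : 0 < cos θ) (hy : ‖y‖ < tan θ) : gnom y ∈ openConeCap n θ := by
  refine ⟨gnom_ne_zero y, ?_⟩
  rw [gnom_last, norm_gnom, ← lt_div_iff₀' hθ, one_div, ← inv_sqrt_one_add_tan_sq hθ, inv_inv]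
  gcongr

lemma exists_smul_gnom_eq (hθ : 0 < cos θ) (hR : 0 ≤ tan θ) {x : V n} (hx : x ∈ coneCap n θ) :
    ∃ c : ℝ, 0 < c ∧ ∃ y : EuclideanSpace ℝ (Fin n), ‖y‖ ≤ tan θ ∧ x = c • gnom y := by
  have hc : 0 < x (Fin.last n) :=
    (mul_pos hθ (norm_pos_iff.2 (mem_coneCap_iff.1 hx).1)).trans_le (mem_coneCap_iff.1 hx).2
  obtain ⟨y, hxy⟩ : ∃ y : EuclideanSpace ℝ (Fin n), x = x (Fin.last n) • gnom y := by
    refine ⟨WithLp.toLp 2 fun i => (x (Fin.last n))⁻¹ * x (Fin.castSucc i), PiLp.ext fun i => ?_⟩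
    induction i using Fin.lastCases with
    | last => simp [gnom_last]
    | cast i => simp [gnom_castSucc, hc.ne']
  refine ⟨x (Fin.last n), hc, y, (gnom_mem_coneCap_iff hθ hR).1 ?_, hxy⟩
  rw [← inv_smul_smul₀ hc.ne' (gnom y), ← hxy]
  exact smul_mem_coneCap hx (inv_pos.2 hc)

/-- The unit vector in the direction of `gnom y`. -/
def gnomUnit (y : EuclideanSpace ℝ (Fin n)) : V n := ‖gnom y‖⁻¹ • gnom y

lemma norm_gnomUnit (y : EuclideanSpace ℝ (Fin n)) : ‖gnomUnit y‖ = 1 :=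
  norm_smul_inv_norm (gnom_ne_zero y)

lemma gnomUnit_last (y : EuclideanSpace ℝ (Fin n)) : gnomUnit y (Fin.last n) = ‖gnom y‖⁻¹ := by
  rw [gnomUnit, PiLp.smul_apply, gnom_last, smul_eq_mul, mul_one]

lemma gnomUnit_mem_openConeCap (hθ : 0 < cos θ) (hy : ‖y‖ < tan θ) :
    gnomUnit y ∈ openConeCap n θ :=
  smul_mem_openConeCap (gnom_mem_openConeCap hθ hy) (inv_pos.2 (norm_gnom_pos y))

lemma gnomUnit_mem_sphCap (hθ : 0 < cos θ) (hy : ‖y‖ < tan θ) : gnomUnit y ∈ sphCap n θ :=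
  mem_sphCap_of_mem_openConeCap (gnomUnit_mem_openConeCap hθ hy) (norm_gnomUnit y)

lemma gnomUnit_mem_sphCapBdry (hθ : 0 < cos θ) (hy : ‖y‖ = tan θ) :
    gnomUnit y ∈ sphCapBdry n θ :=
  ⟨norm_gnomUnit y, by rw [gnomUnit_last, norm_gnom, hy, inv_sqrt_one_add_tan_sq hθ]⟩

lemma horiz_ne_smul_gnomUnit {v : EuclideanSpace ℝ (Fin n)} (hv : v ≠ 0) (c : ℝ) :
    horiz n v ≠ c • gnomUnit y := fun h => by
  have hc : c = 0 := by
    simpa [horiz_last, gnomUnit_last, gnom_ne_zero] using congrArg (· (Fin.last n)) h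
  refine hv (PiLp.ext fun i => ?_)
  simpa [hc, horiz_castSucc] using congrArg (· (Fin.castSucc i)) h

namespace IsHomExt

variable {g G : V n → ℝ} (h : IsHomExt n θ 2 g G)
include h

lemma contDiffAt_comp_gnom (hθ : 0 < cos θ) (hR : 0 ≤ tan θ)
    (hy : y ∈ Metric.closedBall 0 (tan θ)) : ContDiffAt ℝ 2 (G ∘ gnom) y :=
  (h.contDiffAt ((gnom_mem_coneCap_iff hθ hR).2 (mem_closedBall_zero_iff.1 hy))).comp y
    contDiff_gnom.contDiffAt

lemma fderiv_comp_gnom (hy : gnom y ∈ coneCap n θ) :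
    fderiv ℝ (G ∘ gnom) y = (fderiv ℝ G (gnom y)).comp (horiz n) :=
  ((h.differentiableAt hy).hasFDerivAt.comp y (hasFDerivAt_gnom y)).fderiv

lemma isRobin_comp_gnom (hθ : 0 < cos θ) (hc : IsCapillaryF n θ G) :
    IsRobin (tan θ) (G ∘ gnom) := by
  intro y hy
  have hmem : gnom y ∈ coneCap n θ :=
    (gnom_mem_coneCap_iff hθ (hy ▸ norm_nonneg y)).2 hy.le
  have hE : fderiv ℝ G (gnom y) (Etop n) = 0 := by
    rw [← h.fderiv_smul_Etop hθ hmem (inv_pos.2 (norm_gnom_pos y))]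
    exact hc _ (gnomUnit_mem_sphCapBdry hθ hy)
  have hy' : horiz n y = gnom y - Etop n := by simp [gnom]
  rw [h.fderiv_comp_gnom hmem, ContinuousLinearMap.comp_apply, hy', map_sub, hE, sub_zero,
    h.fderiv_self hmem, Function.comp_apply]

lemma fderiv_fderiv_comp_gnom (hθ : 0 < cos θ) (hy : ‖y‖ < tan θ)
    (v w : EuclideanSpace ℝ (Fin n)) :
    fderiv ℝ (fderiv ℝ (G ∘ gnom)) y v w =
      ‖gnom y‖⁻¹ * fderiv ℝ (fderiv ℝ G) (gnomUnit y) (horiz n v) (horiz n w) := by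
  have hmem := gnom_mem_openConeCap hθ hy
  have heq : fderiv ℝ (G ∘ gnom) =ᶠ[𝓝 y] fun z => (fderiv ℝ G (gnom z)).comp (horiz n) := by
    filter_upwards [hasFDerivAt_gnom y |>.continuousAt (isOpen_openConeCap.mem_nhds hmem)]
      with z hz using h.fderiv_comp_gnom (openConeCap_subset_coneCap hz)
  have hd := ((h.differentiableAt_fderiv (openConeCap_subset_coneCap hmem)).hasFDerivAt.comp y
    (hasFDerivAt_gnom y)).clm_comp (hasFDerivAt_const (horiz n) y)
  rw [(hd.congr_of_eventuallyEq heq).fderiv]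
  simp [← h.smul_fderiv_fderiv_smul hmem (inv_pos.2 (norm_gnom_pos y)), gnomUnit]

lemma hess_comp_gnom (hθ : 0 < cos θ) (hy : ‖y‖ < tan θ) :
    hess (G ∘ gnom) y =
      ‖gnom y‖⁻¹ • (hessM n G (gnomUnit y)).submatrix Fin.castSucc Fin.castSucc := by
  ext i j
  rw [hess, Matrix.of_apply, h.fderiv_fderiv_comp_gnom hθ hy, horiz_single, horiz_single,
    h.fderiv_fderiv_comm (openConeCap_subset_coneCap (gnomUnit_mem_openConeCap hθ hy))]
  rfl

lemma isSymm_hessM {u : V n} (hu : u ∈ coneCap n θ) : (hessM n G u).IsSymm := by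
  ext i j
  exact h.fderiv_fderiv_comm hu _ _

lemma fderiv_fderiv_apply_self {u : V n} (hu : u ∈ openConeCap n θ) (v : V n) :
    fderiv ℝ (fderiv ℝ G) u v u = 0 := by
  rw [h.fderiv_fderiv_comm (openConeCap_subset_coneCap hu), h.fderiv_fderiv_self hu,
    zero_apply]

lemma hessM_mulVec_self {u : V n} (hu : u ∈ openConeCap n θ) : (hessM n G u).mulVec u = 0 := by
  ext i
  have := h.fderiv_fderiv_apply_self hu (EuclideanSpace.single i 1)
  nth_rw 2 [← sum_smul_single u] at this
  simpa [Matrix.mulVec, dotProduct, hessM, mul_comm] using this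

lemma fderiv_fderiv_pos_of_ne_smul (hτ : TauPos n θ G) {u v : V n} (hu : u ∈ openConeCap n θ)
    (hu' : ‖u‖ = 1) (hv : ∀ c : ℝ, v ≠ c • u) : 0 < fderiv ℝ (fderiv ℝ G) u v v := by
  have horth : ⟪v - ⟪v, u⟫ • u, u⟫ = 0 := by
    rw [inner_sub_left, real_inner_smul_left, real_inner_self_eq_norm_sq, hu']
    ring
  have hpos := hτ.2 u (mem_sphCap_of_mem_openConeCap hu hu') _ (sub_ne_zero.2 (hv ⟪v, u⟫)) horth
  simpa [hessQ, h.fderiv_fderiv_self hu, h.fderiv_fderiv_apply_self hu] using hpos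

lemma posDef_hess_comp_gnom (hθ : 0 < cos θ) (hτ : TauPos n θ G) (hy : y ∈ Metric.ball 0 (tan θ)) :
    (hess (G ∘ gnom) y).PosDef := by
  rw [mem_ball_zero_iff] at hy
  have hu := gnomUnit_mem_openConeCap hθ hy
  refine Matrix.PosDef.of_dotProduct_mulVec_pos ?_ fun v hv => ?_
  · rw [h.hess_comp_gnom hθ hy, Matrix.IsHermitian, Matrix.conjTranspose_eq_transpose_of_trivial]
    exact ((h.isSymm_hessM (openConeCap_subset_coneCap hu)).submatrix Fin.castSucc).smul _
  · have hv' : (WithLp.toLp 2 v : EuclideanSpace ℝ (Fin n)) ≠ 0 := by simpa using hv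
    have := h.fderiv_fderiv_pos_of_ne_smul hτ hu (norm_gnomUnit y) (horiz_ne_smul_gnomUnit hv')
    rw [star_trivial, ← WithLp.ofLp_toLp 2 v, dotProduct_hess_mulVec,
      h.fderiv_fderiv_comp_gnom hθ hy]
    exact mul_pos (inv_pos.2 (norm_gnom_pos y)) this

end IsHomExt

end Gnomonic

section Cap

variable {n : ℕ} {θ : ℝ}

/-- The homogeneous extension `|x| - cos θ x_{n+1}` of the support function of the cap `C_θ`. -/
def capGauge (n : ℕ) (θ : ℝ) (x : V n) : ℝ := ‖x‖ - cos θ * x (Fin.last n)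

lemma isHomExt_capGauge :
    IsHomExt n θ 2 (fun ζ => capGauge n θ (ζ + cos θ • Etop n)) (capGauge n θ) := by
  refine ⟨⟨{x | x ≠ 0}, isOpen_ne, fun x hx => (mem_coneCap_iff.1 hx).1, fun x hx => ?_⟩,
    fun l hl u _ => ?_, fun _ _ => rfl⟩
  · exact ((contDiffAt_norm ℝ hx).sub (contDiffAt_const.mul
      (EuclideanSpace.proj (𝕜 := ℝ) (Fin.last n)).contDiff.contDiffAt)).contDiffWithinAt
  · rw [capGauge, capGauge, norm_smul, norm_of_nonneg hl.le, PiLp.smul_apply, smul_eq_mul]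
    ring

lemma hasFDerivAt_norm {E : Type*} [NormedAddCommGroup E] [InnerProductSpace ℝ E] {x : E}
    (hx : x ≠ 0) : HasFDerivAt (fun z : E => ‖z‖) (‖x‖⁻¹ • innerSL ℝ x) x := by
  have h := (hasStrictFDerivAt_norm_sq x).hasFDerivAt.sqrt (pow_ne_zero 2 (norm_ne_zero_iff.2 hx))
  simp only [sqrt_sq (norm_nonneg _)] at h
  refine h.congr_fderiv ?_
  ext v
  simp only [smul_apply, innerSL_apply_apply, nsmul_eq_mul, smul_eq_mul]
  field_simp
  norm_num

lemma fderiv_capGauge {x : V n} (hx : x ≠ 0) : fderiv ℝ (capGauge n θ) x =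
    ‖x‖⁻¹ • innerSL ℝ x - cos θ • EuclideanSpace.proj (Fin.last n) :=
  ((hasFDerivAt_norm hx).sub
    ((EuclideanSpace.proj (𝕜 := ℝ) (Fin.last n)).hasFDerivAt.const_mul (cos θ))).fderiv

lemma fderiv_fderiv_capGauge {u : V n} (hu : ‖u‖ = 1) (v w : V n) :
    fderiv ℝ (fderiv ℝ (capGauge n θ)) u v w = ⟪v, w⟫ - ⟪u, v⟫ * ⟪u, w⟫ := by
  have hu0 : u ≠ 0 := norm_ne_zero_iff.1 (by simp [hu])
  have heq : fderiv ℝ (capGauge n θ) =ᶠ[𝓝 u] fun x =>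
      ‖x‖⁻¹ • innerSL ℝ x - cos θ • EuclideanSpace.proj (Fin.last n) := by
    filter_upwards [isOpen_ne.mem_nhds hu0] with x hx using fderiv_capGauge hx
  have hinv := (hasDerivAt_inv (norm_ne_zero_iff.2 hu0)).comp_hasFDerivAt u (hasFDerivAt_norm hu0)
  have hd := ((hinv.smul (innerSL ℝ : V n →L[ℝ] V n →L[ℝ] ℝ).hasFDerivAt).sub_const
    (cos θ • EuclideanSpace.proj (𝕜 := ℝ) (Fin.last n))).congr_of_eventuallyEq heq
  rw [hd.fderiv]
  simp only [Function.comp_apply, hu, inv_one, one_smul, one_pow, neg_smul, add_apply,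
    ContinuousLinearMap.smulRight_apply, neg_apply, coe_innerSL_apply, smul_apply, smul_eq_mul,
    sub_eq_add_neg]
  rfl

lemma isCapillaryF_capGauge : IsCapillaryF n θ (capGauge n θ) := by
  rintro u ⟨hu, hu'⟩
  rw [fderiv_capGauge (norm_ne_zero_iff.1 (by simp [hu])), hu]
  simp [Etop, hu', EuclideanSpace.inner_single_right]

lemma tauPos_capGauge : TauPos n θ (capGauge n θ) := by
  refine ⟨fun u hu v => ?_, fun u hu v hv hvu => ?_⟩
  · rw [hessQ, fderiv_fderiv_capGauge hu.1, sub_nonneg]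
    simpa [real_inner_self_eq_norm_sq, hu.1] using real_inner_mul_inner_self_le u v
  · rw [hessQ, fderiv_fderiv_capGauge hu.1, real_inner_comm v u, hvu, mul_zero, sub_zero]
    exact real_inner_self_pos.2 hv

lemma hessM_capGauge {u : V n} (hu : ‖u‖ = 1) :
    hessM n (capGauge n θ) u = 1 - Matrix.vecMulVec u.ofLp u.ofLp := by
  ext i j
  rw [hessM, fderiv_fderiv_capGauge hu]
  simp [EuclideanSpace.inner_single_right, Matrix.one_apply, Matrix.vecMulVec_apply, eq_comm]

lemma hess_capGauge_comp_gnom (hθ : 0 < cos θ) {y : EuclideanSpace ℝ (Fin n)} (hy : ‖y‖ < tan θ) :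
    hess (capGauge n θ ∘ gnom) y = ‖gnom y‖⁻¹ •
      (1 - Matrix.vecMulVec (Fin.init (gnomUnit y).ofLp) (Fin.init (gnomUnit y).ofLp)) := by
  rw [isHomExt_capGauge.hess_comp_gnom hθ hy, hessM_capGauge (norm_gnomUnit y)]
  congr 1
  ext i j
  simp [Fin.init, Matrix.one_apply, Matrix.vecMulVec_apply]

end Cap

section Kernel

variable {n k : ℕ} {θ : ℝ} {s G υ Υ : V n → ℝ}

lemma coeff_detPencil_hess_comp_gnom_eq_zero (hθ : 0 < cos θ) (hk : 1 ≤ k) (hkn : k ≤ n)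
    (hs : IsHomExt n θ 2 s G) (hυ : IsHomExt n θ 2 υ Υ) {y : EuclideanSpace ℝ (Fin n)}
    (hy : ‖y‖ < tan θ)
    (hker : deriv (fun t : ℝ => (-1) ^ k * (hessM n G (gnomUnit y) +
      t • hessM n Υ (gnomUnit y)).charpoly.coeff (n + 1 - k)) 0 = 0) :
    (detPencil ![hess (capGauge n θ ∘ gnom) y, hess (G ∘ gnom) y, hess (Υ ∘ gnom) y]).coeff
      (ternaryExp (n - k) (k - 1) 1) = 0 := by
  have hu := gnomUnit_mem_openConeCap hθ hy
  have hu' := openConeCap_subset_coneCap hu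
  have hunit : (gnomUnit y).ofLp ⬝ᵥ (gnomUnit y).ofLp = 1 := by
    simp [dotProduct, ← sq, ← EuclideanSpace.real_norm_sq_eq, norm_gnomUnit]
  have hlin := deriv_coeff_charpoly_add_smul hk (by rw [Fintype.card_fin]; omega)
    (hessM n G (gnomUnit y)) (hessM n Υ (gnomUnit y))
  rw [Fintype.card_fin, hker, Nat.succ_sub hkn] at hlin
  have hsmul : ![hess (capGauge n θ ∘ gnom) y, hess (G ∘ gnom) y, hess (Υ ∘ gnom) y] =
      ‖gnom y‖⁻¹ • ![1 - Matrix.vecMulVec (Fin.init (gnomUnit y).ofLp) (Fin.init (gnomUnit y).ofLp),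
        (hessM n G (gnomUnit y)).submatrix Fin.castSucc Fin.castSucc,
        (hessM n Υ (gnomUnit y)).submatrix Fin.castSucc Fin.castSucc] := by
    rw [hess_capGauge_comp_gnom hθ hy, hs.hess_comp_gnom hθ hy, hυ.hess_comp_gnom hθ hy]
    simp
  rw [hsmul, detPencil_smul, MvPolynomial.coeff_C_mul,
    coeff_detPencil_leadingBlock (hs.isSymm_hessM hu') (hυ.isSymm_hessM hu')
      (hs.hessM_mulVec_self hu) (hυ.hessM_mulVec_self hu) hunit, ← hlin, mul_zero, mul_zero]

lemma exists_eq_inner_of_comp_gnom (hθ : 0 < cos θ) (hR : 0 ≤ tan θ) (hυ : IsHomExt n θ 2 υ Υ)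
    {L : EuclideanSpace ℝ (Fin n) →L[ℝ] ℝ}
    (hL : EqOn (Υ ∘ gnom) L (Metric.closedBall 0 (tan θ))) :
    ∃ a : V n, a (Fin.last n) = 0 ∧ ∀ ζ ∈ capCap n θ, υ ζ = ⟪a, ζ⟫ := by
  set b := (InnerProductSpace.toDual ℝ _).symm L with hb
  refine ⟨horiz n b, horiz_last b, fun ζ hζ => ?_⟩
  have hmem : ζ + cos θ • Etop n ∈ coneCap n θ :=
    ⟨1, one_pos, _, ⟨hζ.2, by simpa [Etop_last] using hζ.1⟩, (one_smul ℝ _).symm⟩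
  obtain ⟨c, hc, y, hy, hcy⟩ := exists_smul_gnom_eq hθ hR hmem
  have hgnom : gnom y ∈ coneCap n θ := (gnom_mem_coneCap_iff hθ hR).2 hy
  calc υ ζ = Υ (c • gnom y) := by rw [← hυ.2.2 ζ hζ, hcy]
    _ = c * Υ (gnom y) := hυ.apply_smul hgnom hc
    _ = c * L y := congrArg (c * ·) (hL (mem_closedBall_zero_iff.2 hy))
    _ = ⟪horiz n b, c • gnom y⟫ := by
      rw [inner_smul_right, inner_horiz_gnom, hb, InnerProductSpace.toDual_symm_apply]
    _ = ⟪horiz n b, ζ⟫ := by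
      rw [← hcy, inner_add_right, inner_smul_right, inner_horiz_Etop, mul_zero, add_zero]

theorem capillary_linearized_kernel_general (hθ : θ ∈ Ioo 0 (π / 2)) (hk : 1 ≤ k) (hkn : k ≤ n)
    (hs : IsHomExt n θ 2 s G) (hcap : IsCapillaryF n θ G) (hτ : TauPos n θ G)
    (hυ : IsHomExt n θ 2 υ Υ) (hυcap : IsCapillaryF n θ Υ)
    (hker : ∀ ζ ∈ capCap n θ,
      deriv (fun t : ℝ => (-1 : ℝ) ^ k * ((hessM n G (ζ + cos θ • Etop n) +
        t • hessM n Υ (ζ + cos θ • Etop n)).charpoly.coeff (n + 1 - k))) 0 = 0) :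
    ∃ a : V n, a (Fin.last n) = 0 ∧ ∀ ζ ∈ capCap n θ, υ ζ = ⟪a, ζ⟫ := by
  have hc : 0 < cos θ := cos_pos_of_mem_Ioo ⟨by linarith [hθ.1, pi_pos], hθ.2⟩
  have hR : 0 < tan θ := tan_pos_of_pos_of_lt_pi_div_two hθ.1 hθ.2
  have hcap₀ := isHomExt_capGauge (n := n) (θ := θ)
  obtain ⟨L, hL⟩ := exists_clm_eqOn_closedBall_of_coeff_detPencil hR hk
    (by rwa [Fintype.card_fin])
    (fun _ => hcap₀.contDiffAt_comp_gnom hc hR.le) (fun _ => hs.contDiffAt_comp_gnom hc hR.le)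
    (fun _ => hυ.contDiffAt_comp_gnom hc hR.le) (hcap₀.isRobin_comp_gnom hc isCapillaryF_capGauge)
    (hs.isRobin_comp_gnom hc hcap) (hυ.isRobin_comp_gnom hc hυcap)
    (fun _ => hcap₀.posDef_hess_comp_gnom hc tauPos_capGauge)
    (fun _ => hs.posDef_hess_comp_gnom hc hτ) fun y hy => by
      rw [mem_ball_zero_iff] at hy
      have := hker (gnomUnit y - cos θ • Etop n)
        ⟨by simpa [Etop_last] using (gnomUnit_mem_sphCap hc hy).2, by simp [norm_gnomUnit]⟩
      rw [sub_add_cancel] at this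
      rw [Fintype.card_fin]
      exact coeff_detPencil_hess_comp_gnom_eq_zero hc hk hkn hs hυ hy this
  exact exists_eq_inner_of_comp_gnom hc hR.le hυ hL

end Kernel

/-- the kernel of the linearized `σ_k` operator consists of the
horizontal linear functions. -/
theorem capillary_linearized_kernel (n k : ℕ) (hn : 1 ≤ n) (θ : ℝ)
    (hθ : θ ∈ Ioo 0 (π / 2)) (hk : 1 ≤ k) (hkn : k ≤ n)
    (s G υ Υ : V n → ℝ)
    (hs : IsHomExt n θ ⊤ s G) (hcap : IsCapillaryF n θ G) (hτ : TauPos n θ G)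
    (hυ : IsHomExt n θ 2 υ Υ) (hυcap : IsCapillaryF n θ Υ)
    (hker : ∀ ζ ∈ capCap n θ,
      deriv (fun t : ℝ =>
        (-1 : ℝ) ^ k *
          ((hessM n G (ζ + Real.cos θ • Etop n) +
            t • hessM n Υ (ζ + Real.cos θ • Etop n)).charpoly.coeff (n + 1 - k))) 0 = 0) :
    ∃ a : V n, a (Fin.last n) = 0 ∧ ∀ ζ ∈ capCap n θ, υ ζ = ⟪a, ζ⟫ :=
  capillary_linearized_kernel_general hθ hk hkn (hs.mono le_top) hcap hτ hυ hυcap hker
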